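/- arXiv:math/0008205 — 2 statements merged into one kernel-verified Lean document; each statement's English description precedes it below -/
import Mathlib

section
/- Let X be a smooth complex hypersurface in P^{n+1} of dimension n ≥ 2 and degree d ≥ 3. Then X admits no endomorphism of degree > 1, i.e. every surjective morphism f : X → X is an isomorphism. -/
open MvPolynomial

/-- Complex projective space `ℙ^N` as the projectivization of `ℂ^{N+1}`. -/
abbrev ProjSpace (N : ℕ) := Projectivization ℂ (Fin (N + 1) → ℂ)

/-- The set of points of `ℙ^N` where the (homogeneous) polynomial `P` vanishes:
the hypersurface `X = V(P)`. -/
def hypersurface {N : ℕ} (P : MvPolynomial (Fin (N + 1)) ℂ) : Set (ProjSpace N) :=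
  {x | ∀ (v : Fin (N + 1) → ℂ) (hv : v ≠ 0), x = Projectivization.mk ℂ v hv →
    MvPolynomial.eval v P = 0}

/-- Smoothness of the hypersurface `V(P)` via the Jacobian criterion: at every nonzero
vector where `P` vanishes, some partial derivative of `P` is nonzero. -/
def IsSmoothHypersurface {N : ℕ} (P : MvPolynomial (Fin (N + 1)) ℂ) : Prop :=
  ∀ v : Fin (N + 1) → ℂ, v ≠ 0 → MvPolynomial.eval v P = 0 →
    ∃ i, MvPolynomial.eval v (MvPolynomial.pderiv i P) ≠ 0

/-- `f : X → X` is a morphism of algebraic varieties: it is given (globally) by a family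
of homogeneous polynomials of a common degree `e` with no common zero on `X`. -/
def IsAlgebraicSelfMap {N : ℕ} (P : MvPolynomial (Fin (N + 1)) ℂ)
    (f : hypersurface P → hypersurface P) : Prop :=
  ∃ (e : ℕ) (F : Fin (N + 1) → MvPolynomial (Fin (N + 1)) ℂ),
    (∀ i, (F i).IsHomogeneous e) ∧
    ∀ (v : Fin (N + 1) → ℂ) (hv : v ≠ 0) (hx : Projectivization.mk ℂ v hv ∈ hypersurface P),
      ∃ hFv : (fun i => MvPolynomial.eval v (F i)) ≠ 0,
        (f ⟨Projectivization.mk ℂ v hv, hx⟩ : ProjSpace N) =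
          Projectivization.mk ℂ (fun i => MvPolynomial.eval v (F i)) hFv

namespace SmoothHypersurface

section Homogeneous

variable {σ K : Type*} [Field K]

/-- An ideal of the polynomial ring is graded if it is closed under taking homogeneous
components. -/
def IsGraded (I : Ideal (MvPolynomial σ K)) : Prop :=
  ∀ p ∈ I, ∀ n, homogeneousComponent n p ∈ I

attribute [local instance] MvPolynomial.gradedAlgebra in
theorem homogeneousComponent_mul_of_le {a : MvPolynomial σ K} {α n : ℕ} (ha : a.IsHomogeneous α)
    (h : α ≤ n) (p : MvPolynomial σ K) :
    homogeneousComponent n (a * p) = a * homogeneousComponent (n - α) p := by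
  have := DirectSum.coe_decompose_mul_of_left_mem_of_le (homogeneousSubmodule σ K)
    (a := a) (b := p) (i := α) (n := n) ha h
  simpa only [← decomposition.decompose'_apply] using! this

attribute [local instance] MvPolynomial.gradedAlgebra in
theorem homogeneousComponent_mul_of_lt {a : MvPolynomial σ K} {α n : ℕ} (ha : a.IsHomogeneous α)
    (h : n < α) (p : MvPolynomial σ K) :
    homogeneousComponent n (a * p) = 0 := by
  have := DirectSum.coe_decompose_mul_of_left_mem_of_not_le (homogeneousSubmodule σ K)
    (a := a) (b := p) (i := α) (n := n) ha (not_le.2 h)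
  simpa only [← decomposition.decompose'_apply] using! this

theorem homogeneousComponent_self {y : MvPolynomial σ K} {D : ℕ} (hy : y.IsHomogeneous D) :
    homogeneousComponent D y = y := by
  rw [homogeneousComponent_of_mem (m := D) (n := D) hy, if_pos rfl]

theorem isGraded_span {s : Set (MvPolynomial σ K)} (hs : ∀ a ∈ s, ∃ α, a.IsHomogeneous α) :
    IsGraded (Ideal.span s) := by
  intro p hp n
  induction hp using Submodule.span_induction generalizing n with
  | mem x h =>
    obtain ⟨α, hα⟩ := hs x h
    rw [homogeneousComponent_of_mem (m := n) (n := α) hα]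
    split_ifs
    · exact Ideal.subset_span h
    · exact Ideal.zero_mem _
  | zero => simp
  | add x y _ _ hx hy => rw [map_add]; exact Ideal.add_mem _ (hx n) (hy n)
  | smul a x hx ih =>
    rw [smul_eq_mul, ← sum_homogeneousComponent a, Finset.sum_mul, map_sum]
    refine Ideal.sum_mem _ fun i _ => ?_
    rcases le_or_gt i n with h | h
    · rw [homogeneousComponent_mul_of_le (homogeneousComponent_isHomogeneous i a) h]
      exact Ideal.mul_mem_left _ _ (ih _)
    · rw [homogeneousComponent_mul_of_lt (homogeneousComponent_isHomogeneous i a) h]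
      exact Ideal.zero_mem _

theorem IsGraded.exists_sub_mul_mem {I : Ideal (MvPolynomial σ K)} (hI : IsGraded I)
    {a y : MvPolynomial σ K} {α D : ℕ} (ha : a.IsHomogeneous α) (hy : y.IsHomogeneous D)
    (h : y ∈ I ⊔ Ideal.span {a}) :
    ∃ z : MvPolynomial σ K, z.IsHomogeneous (D - α) ∧ (D < α → z = 0) ∧ y - a * z ∈ I := by
  obtain ⟨b, hb, c, hc, hbc⟩ := Submodule.mem_sup.1 h
  obtain ⟨z, rfl⟩ := Ideal.mem_span_singleton.1 hc
  have key := congrArg (homogeneousComponent D) hbc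
  rw [map_add, homogeneousComponent_self hy] at key
  rcases lt_or_ge D α with hlt | hle
  · rw [homogeneousComponent_mul_of_lt ha hlt] at key
    refine ⟨0, isHomogeneous_zero _ _ _, fun _ => rfl, ?_⟩
    rw [← key]
    simpa using hI b hb D
  · rw [homogeneousComponent_mul_of_le ha hle] at key
    refine ⟨homogeneousComponent (D - α) z, homogeneousComponent_isHomogeneous _ _,
      fun h => absurd h (not_lt.2 hle), ?_⟩
    rw [← key, add_sub_cancel_right]
    exact hI b hb D

theorem IsGraded.mem_of_components {I : Ideal (MvPolynomial σ K)} {z : MvPolynomial σ K}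
    (h : ∀ n, homogeneousComponent n z ∈ I) : z ∈ I := by
  rw [← sum_homogeneousComponent z]
  exact Ideal.sum_mem _ fun i _ => h i

/-- A homogeneous element that is a nonzerodivisor on homogeneous classes modulo a graded ideal
is a nonzerodivisor modulo that ideal. -/
theorem IsGraded.mem_of_mul_mem {I J : Ideal (MvPolynomial σ K)} (hI : IsGraded I)
    {g : MvPolynomial σ K} {γ : ℕ} (hg : g.IsHomogeneous γ)
    (h : ∀ D (z : MvPolynomial σ K), z.IsHomogeneous D → g * z ∈ I → z ∈ J)
    {z : MvPolynomial σ K} (hz : g * z ∈ I) : z ∈ J := by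
  refine IsGraded.mem_of_components fun n => h n _ (homogeneousComponent_isHomogeneous _ _) ?_
  have := hI _ hz (n + γ)
  rwa [homogeneousComponent_mul_of_le hg (Nat.le_add_left _ _), Nat.add_sub_cancel] at this

/-- Homogeneous coefficients for a homogeneous member of an ideal generated by homogeneous
elements. -/
theorem exists_homogeneous_coeffs {ι : Type*} [Fintype ι] {f : ι → MvPolynomial σ K} {deg : ι → ℕ}
    (hf : ∀ i, (f i).IsHomogeneous (deg i)) {y : MvPolynomial σ K} {D : ℕ}
    (hy : y.IsHomogeneous D) (h : y ∈ Ideal.span (Set.range f)) :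
    ∃ u : ι → MvPolynomial σ K, (∀ i, (u i).IsHomogeneous (D - deg i)) ∧
      (∀ i, D < deg i → u i = 0) ∧ ∑ i, u i * f i = y := by
  obtain ⟨c, hc⟩ := (Ideal.mem_span_range_iff_exists_fun).1 h
  refine ⟨fun i => if deg i ≤ D then homogeneousComponent (D - deg i) (c i) else 0, ?_, ?_, ?_⟩
  · intro i
    dsimp only
    split_ifs
    · exact homogeneousComponent_isHomogeneous _ _
    · exact isHomogeneous_zero _ _ _
  · intro i hi
    exact if_neg (not_le.2 hi)
  · rw [← homogeneousComponent_self hy, ← hc, map_sum]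
    refine Finset.sum_congr rfl fun i _ => ?_
    dsimp only
    rw [mul_comm (c i)]
    split_ifs with h
    · rw [homogeneousComponent_mul_of_le (hf i) h, mul_comm]
    · rw [homogeneousComponent_mul_of_lt (hf i) (not_le.1 h), zero_mul]

end Homogeneous

section Regular

variable {σ K : Type*} [Field K]

/-- A homogeneous system of parameters: as many forms of positive degree as there are variables,
generating an ideal whose radical contains all the variables. -/
structure IsSOP (f : σ → MvPolynomial σ K) (deg : σ → ℕ) : Prop where
  homog : ∀ i, (f i).IsHomogeneous (deg i)
  pos : ∀ i, 0 < deg i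
  rad : ∀ i, (X i : MvPolynomial σ K) ∈ (Ideal.span (Set.range f)).radical

/-- Every member of the family is a nonzerodivisor modulo any set of other members. -/
def IsReg (f : σ → MvPolynomial σ K) : Prop :=
  ∀ (J : Set σ) (k : σ), k ∉ J → ∀ z, f k * z ∈ Ideal.span (f '' J) → z ∈ Ideal.span (f '' J)

theorem span_image_insert (f : σ → MvPolynomial σ K) (J : Set σ) (k : σ) :
    Ideal.span (f '' insert k J) = Ideal.span (f '' J) ⊔ Ideal.span {f k} := by
  rw [Set.image_insert_eq, Ideal.span_insert, sup_comm]

theorem span_range_eq (f : σ → MvPolynomial σ K) (k : σ) :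
    Ideal.span (Set.range f) = Ideal.span (f '' {k}ᶜ) ⊔ Ideal.span {f k} := by
  rw [← span_image_insert, ← Set.image_univ]
  congr 2
  ext x
  simp [em]

theorem IsSOP.isGraded {f : σ → MvPolynomial σ K} {deg : σ → ℕ} (hf : IsSOP f deg) (J : Set σ) :
    IsGraded (Ideal.span (f '' J)) :=
  isGraded_span (by rintro _ ⟨i, _, rfl⟩; exact ⟨_, hf.homog i⟩)

theorem IsSOP.mem_radical_of_homogeneous {f : σ → MvPolynomial σ K} {deg : σ → ℕ}
    (hf : IsSOP f deg) {p : MvPolynomial σ K} {α : ℕ} (hp : p.IsHomogeneous α) (hα : 0 < α) :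
    p ∈ (Ideal.span (Set.range f)).radical := by
  have h : p ∈ Ideal.span (X '' (Set.univ : Set σ) : Set (MvPolynomial σ K)) := by
    rw [mem_ideal_span_X_image]
    intro m hm
    by_contra! hcon
    have h0 : m = 0 := by ext i; simpa using hcon i
    have := hp (mem_support_iff.1 hm)
    rw [h0] at this
    simp at this
    omega
  refine (Ideal.span_le.2 ?_) h
  rintro _ ⟨i, _, rfl⟩
  exact hf.rad i

variable [DecidableEq σ]

theorem image_update_of_notMem (f : σ → MvPolynomial σ K) {J : Set σ} {k : σ} (hk : k ∉ J)
    (g : MvPolynomial σ K) : Function.update f k g '' J = f '' J :=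
  Set.image_congr fun i hi => Function.update_of_ne (fun h : i = k => hk (h ▸ hi)) _ _

theorem span_range_update (f : σ → MvPolynomial σ K) (k : σ) (g : MvPolynomial σ K) :
    Ideal.span (Set.range (Function.update f k g)) =
      Ideal.span (f '' {k}ᶜ) ⊔ Ideal.span {g} := by
  rw [span_range_eq _ k, image_update_of_notMem f (by simp), Function.update_self]

variable [Finite σ]

theorem IsReg.update_nonzerodivisor {f : σ → MvPolynomial σ K} {deg : σ → ℕ} (hf : IsSOP f deg)
    (hr : IsReg f) {k : σ} {g : MvPolynomial σ K} {γ : ℕ}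
    (hg : IsSOP (Function.update f k g) (Function.update deg k γ)) (J : Set σ) (hk : k ∉ J) :
    ∀ z, g * z ∈ Ideal.span (f '' J) → z ∈ Ideal.span (f '' J) := by
  have hgh : g.IsHomogeneous γ := by simpa using hg.homog k
  induction J using WellFoundedGT.induction with
  | ind J ih =>
  by_cases hJ : J = {k}ᶜ
  · intro z hz
    have hfk := hg.mem_radical_of_homogeneous (hf.homog k) (hf.pos k)
    obtain ⟨t, ht⟩ := hfk
    rw [span_range_update, ← hJ] at ht
    obtain ⟨b, hb, c, hc, hbc⟩ := Submodule.mem_sup.1 ht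
    obtain ⟨w, rfl⟩ := Ideal.mem_span_singleton.1 hc
    have h1 : f k ^ t * z ∈ Ideal.span (f '' J) := by
      rw [← hbc, show (b + g * w) * z = z * b + w * (g * z) by ring]
      exact Ideal.add_mem _ (Ideal.mul_mem_left _ _ hb) (Ideal.mul_mem_left _ _ hz)
    clear ht hbc
    induction t with
    | zero => simpa using h1
    | succ t iht =>
      apply iht
      rw [pow_succ', mul_assoc] at h1
      exact hr J k hk _ h1
  · obtain ⟨j, hjJ, hjk⟩ : ∃ j, j ∉ J ∧ j ≠ k := by
      by_contra! hcon
      apply hJ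
      ext x
      simp only [Set.mem_compl_iff, Set.mem_singleton_iff]
      exact ⟨fun hx h => hk (h ▸ hx), fun hx => by_contra fun h => hx (hcon x h)⟩
    have ihj := ih (insert j J) (Set.ssubset_insert hjJ) (by simp [hk, hjk.symm])
    intro z hz
    refine IsGraded.mem_of_mul_mem (hf.isGraded J) hgh ?_ hz
    intro D
    induction D using Nat.strong_induction_on with
    | _ D ihD =>
    intro z hzD hz
    have h1 : z ∈ Ideal.span (f '' J) ⊔ Ideal.span {f j} := by
      rw [← span_image_insert]
      exact ihj z (Ideal.span_mono (Set.image_mono (Set.subset_insert _ _)) hz)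
    obtain ⟨z₁, hz₁, hz₁0, hsub⟩ := (hf.isGraded J).exists_sub_mul_mem (hf.homog j) hzD h1
    have h2 : z₁ ∈ Ideal.span (f '' J) := by
      rcases lt_or_ge D (deg j) with hlt | hle
      · rw [hz₁0 hlt]; exact Ideal.zero_mem _
      · have := hf.pos j
        refine ihD _ (by omega) z₁ hz₁ (hr J j hjJ _ ?_)
        rw [show f j * (g * z₁) = g * z - g * (z - f j * z₁) by ring]
        exact Ideal.sub_mem _ hz (Ideal.mul_mem_left _ _ hsub)
    rw [show z = (z - f j * z₁) + f j * z₁ by ring]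
    exact Ideal.add_mem _ hsub (Ideal.mul_mem_left _ _ h2)

theorem IsReg.update {f : σ → MvPolynomial σ K} {deg : σ → ℕ} (hf : IsSOP f deg)
    (hr : IsReg f) {k : σ} {g : MvPolynomial σ K} {γ : ℕ}
    (hg : IsSOP (Function.update f k g) (Function.update deg k γ)) :
    IsReg (Function.update f k g) := by
  have hnzd := fun J hk => IsReg.update_nonzerodivisor hf hr hg J hk
  intro J j hj z hz
  by_cases hkJ : k ∈ J
  · have hjk : j ≠ k := fun h => hj (h ▸ hkJ)
    rw [Function.update_of_ne hjk] at hz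
    have hJ : J = insert k (J \ {k}) := by simp [Set.insert_eq_of_mem hkJ]
    have hsp : Ideal.span (Function.update f k g '' J) =
        Ideal.span (f '' (J \ {k})) ⊔ Ideal.span {g} := by
      rw [hJ, span_image_insert, image_update_of_notMem f (by simp), Function.update_self]
      simp
    rw [hsp] at hz ⊢
    obtain ⟨b, hb, c, hc, hbc⟩ := Submodule.mem_sup.1 hz
    obtain ⟨w, rfl⟩ := Ideal.mem_span_singleton.1 hc
    have h1 : w ∈ Ideal.span (f '' insert j (J \ {k})) := by
      refine hnzd _ (by simp [hjk.symm]) w ?_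
      rw [span_image_insert, show g * w = -b + f j * z by rw [← hbc]; ring]
      exact Submodule.add_mem_sup (neg_mem hb) (Ideal.mul_mem_right _ _ (Ideal.subset_span rfl))
    rw [span_image_insert] at h1
    obtain ⟨b', hb', c', hc', hbc'⟩ := Submodule.mem_sup.1 h1
    obtain ⟨w', rfl⟩ := Ideal.mem_span_singleton.1 hc'
    have h2 : z - g * w' ∈ Ideal.span (f '' (J \ {k})) := by
      refine hr _ j (fun h => hj h.1) _ ?_
      rw [show f j * (z - g * w') = b + g * b' by
        rw [mul_sub, ← hbc, ← hbc']; ring]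
      exact Ideal.add_mem _ hb (Ideal.mul_mem_left _ _ hb')
    rw [show z = (z - g * w') + g * w' by ring]
    exact Submodule.add_mem_sup h2 (Ideal.mul_mem_right _ _ (Ideal.subset_span rfl))
  · rw [image_update_of_notMem f hkJ] at hz ⊢
    by_cases hjk : j = k
    · subst hjk
      rw [Function.update_self] at hz
      exact hnzd J hj z hz
    · rw [Function.update_of_ne hjk] at hz
      exact hr J j hj z hz

end Regular

section Socle

variable {σ K : Type*} [Field K]

theorem mem_span_range_X {p : MvPolynomial σ K} (hp : constantCoeff p = 0) :
    p ∈ Ideal.span (Set.range (X : σ → MvPolynomial σ K)) := by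
  rw [← Set.image_univ, mem_ideal_span_X_image]
  intro m hm
  by_contra! hcon
  have h0 : m = 0 := by ext i; simpa using hcon i
  rw [h0, mem_support_iff] at hm
  exact hm hp

theorem constantCoeff_eq_zero_of_isHomogeneous {p : MvPolynomial σ K} {α : ℕ}
    (hp : p.IsHomogeneous α) (hα : 0 < α) : constantCoeff p = 0 := by
  by_contra h
  have := hp (d := 0) h
  simp at this
  omega

theorem mul_mem_of_forall_X_mul_mem {I : Ideal (MvPolynomial σ K)} {y : MvPolynomial σ K}
    (h : ∀ i, X i * y ∈ I) {p : MvPolynomial σ K} {α : ℕ}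
    (hp : p.IsHomogeneous α) (hα : 0 < α) : p * y ∈ I := by
  have := mem_span_range_X (constantCoeff_eq_zero_of_isHomogeneous hp hα)
  clear hp
  induction this using Submodule.span_induction with
  | mem x hx => obtain ⟨i, rfl⟩ := hx; exact h i
  | zero => simp
  | add x z _ _ hx hz => rw [add_mul]; exact Ideal.add_mem _ hx hz
  | smul a x _ hx => rw [smul_eq_mul, mul_assoc]; exact Ideal.mul_mem_left _ _ hx

variable [Fintype σ]

/-- The socle of the quotient by the ideal of `f` is concentrated in the degree
`∑ i, (deg i - 1)`. -/
def HasSocleDegree (f : σ → MvPolynomial σ K) (deg : σ → ℕ) : Prop :=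
  ∀ (D : ℕ) (y : MvPolynomial σ K), y.IsHomogeneous D →
    (∀ i, X i * y ∈ Ideal.span (Set.range f)) → y ∉ Ideal.span (Set.range f) →
      D + Fintype.card σ = ∑ i, deg i

variable [DecidableEq σ]

theorem HasSocleDegree.of_update {f : σ → MvPolynomial σ K} {deg : σ → ℕ} (hf : IsSOP f deg)
    (hr : IsReg f) {k : σ} {b : MvPolynomial σ K} {β : ℕ}
    (hf' : IsSOP (Function.update f k b) (Function.update deg k β))
    (hr' : IsReg (Function.update f k b))
    (hs : HasSocleDegree (Function.update f k b) (Function.update deg k β)) :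
    HasSocleDegree f deg := by
  have hb : b.IsHomogeneous β := by simpa using hf'.homog k
  have hβ : 0 < β := by simpa using hf'.pos k
  have hak := hf.pos k
  have hra : ∀ z, f k * z ∈ Ideal.span (f '' {k}ᶜ) → z ∈ Ideal.span (f '' {k}ᶜ) :=
    hr {k}ᶜ k (by simp)
  have hrb : ∀ z, b * z ∈ Ideal.span (f '' {k}ᶜ) → z ∈ Ideal.span (f '' {k}ᶜ) := by
    have := hr' {k}ᶜ k (by simp)
    rwa [image_update_of_notMem f (by simp), Function.update_self] at this
  intro D y hy hXy hyn
  rw [span_range_eq f k] at hXy hyn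
  have hby := mul_mem_of_forall_X_mul_mem hXy hb hβ
  obtain ⟨z, hz, hz0, hsub⟩ :=
    (hf.isGraded {k}ᶜ).exists_sub_mul_mem (hf.homog k) (hb.mul hy) hby
  have hle : deg k ≤ β + D := by
    by_contra! hlt
    rw [hz0 hlt, mul_zero, sub_zero] at hsub
    exact hyn (Ideal.mem_sup_left (hrb _ hsub))
  have key := hs (β + D - deg k) z hz ?_ ?_
  · rw [Finset.sum_update_of_mem (Finset.mem_univ k)] at key
    have h2 : ∑ i, deg i = deg k + ∑ i ∈ Finset.univ \ {k}, deg i := by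
      conv_lhs => rw [← Function.update_eq_self k deg]
      rw [Finset.sum_update_of_mem (Finset.mem_univ k)]
    omega
  · intro i
    rw [span_range_update]
    obtain ⟨c, hc, e, he, hce⟩ := Submodule.mem_sup.1 (hXy i)
    obtain ⟨w, rfl⟩ := Ideal.mem_span_singleton.1 he
    have : X i * z - b * w ∈ Ideal.span (f '' {k}ᶜ) := by
      apply hra
      rw [show f k * (X i * z - b * w) = b * c - X i * (b * y - f k * z) by
        linear_combination -b * hce]
      exact Ideal.sub_mem _ (Ideal.mul_mem_left _ _ hc) (Ideal.mul_mem_left _ _ hsub)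
    rw [show X i * z = (X i * z - b * w) + b * w by ring]
    exact Submodule.add_mem_sup this (Ideal.mul_mem_right _ _ (Ideal.subset_span rfl))
  · rw [span_range_update]
    intro hzm
    obtain ⟨c, hc, e, he, hce⟩ := Submodule.mem_sup.1 hzm
    obtain ⟨w, rfl⟩ := Ideal.mem_span_singleton.1 he
    apply hyn
    have : y - f k * w ∈ Ideal.span (f '' {k}ᶜ) := by
      apply hrb
      rw [show b * (y - f k * w) = (b * y - f k * z) + f k * c by
        linear_combination - f k * hce]
      exact Ideal.add_mem _ hsub (Ideal.mul_mem_left _ _ hc)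
    rw [show y = (y - f k * w) + f k * w by ring]
    exact Submodule.add_mem_sup this (Ideal.mul_mem_right _ _ (Ideal.subset_span rfl))

end Socle

section Existence

variable {σ K : Type*} [Field K]

attribute [local instance] MvPolynomial.gradedAlgebra in
/-- Every prime ideal contains a prime ideal with the same homogeneous elements, and that one has
no nonzero constant terms. -/
theorem exists_prime_homogeneous_core (q : Ideal (MvPolynomial σ K)) [hq : q.IsPrime] :
    ∃ c : Ideal (MvPolynomial σ K), c.IsPrime ∧ c ≤ q ∧
      c ≤ RingHom.ker (constantCoeff : MvPolynomial σ K →+* K) ∧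
      ∀ p α, p.IsHomogeneous α → p ∈ q → p ∈ c := by
  have hp : (q.homogeneousCore (homogeneousSubmodule σ K)).toIdeal.IsPrime :=
    hq.homogeneousCore
  have hle := q.toIdeal_homogeneousCore_le (homogeneousSubmodule σ K)
  refine ⟨(q.homogeneousCore (homogeneousSubmodule σ K)).toIdeal, hp, hle, ?_, ?_⟩
  · intro p hpc
    rw [RingHom.mem_ker]
    by_contra h
    have h0 := homogeneousComponent_mem_of_mem
      (q.homogeneousCore (homogeneousSubmodule σ K)).isHomogeneous hpc 0
    rw [homogeneousComponent_zero] at h0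
    refine hp.ne_top (Ideal.eq_top_of_isUnit_mem _ h0 ?_)
    rw [isUnit_map_iff]
    exact isUnit_iff_ne_zero.2 h
  · intro p α hpα hpq
    exact Ideal.mem_homogeneousCore_of_homogeneous_of_mem ⟨α, hpα⟩ hpq

theorem not_lt_lt_of_minimal {R : Type*} [CommRing R] [IsNoetherianRing R] {p q m : Ideal R} {x : R}
    [hp : p.IsPrime] [hq : q.IsPrime] [hm : m.IsPrime] (hmin : m ∈ (p ⊔ Ideal.span {x}).minimalPrimes)
    (hpq : p < q) (hqm : q < m) : False := by
  have hmap : ∀ a b : Ideal R, p ≤ a → p ≤ b → a < b →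
      a.map (Ideal.Quotient.mk p) < b.map (Ideal.Quotient.mk p) := by
    intro a b ha hb hab
    refine lt_of_le_of_ne (Ideal.map_mono hab.le) fun h => hab.ne ?_
    have := congrArg (Ideal.comap (Ideal.Quotient.mk p)) h
    rwa [Ideal.comap_map_of_surjective _ Ideal.Quotient.mk_surjective,
      Ideal.comap_map_of_surjective _ Ideal.Quotient.mk_surjective, ← RingHom.ker_eq_comap_bot,
      Ideal.mk_ker, sup_eq_left.2 ha, sup_eq_left.2 hb] at this
  have h1 := Ideal.map_height_le_one_of_mem_minimalPrimes hmin
  have i1 : (p.map (Ideal.Quotient.mk p)).IsPrime := by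
    rw [Ideal.map_quotient_self]; exact Ideal.isPrime_bot
  have i2 : (q.map (Ideal.Quotient.mk p)).IsPrime :=
    Ideal.map_isPrime_of_surjective Ideal.Quotient.mk_surjective (by rw [Ideal.mk_ker]; exact hpq.le)
  have i3 : (m.map (Ideal.Quotient.mk p)).IsPrime :=
    Ideal.map_isPrime_of_surjective Ideal.Quotient.mk_surjective
      (by rw [Ideal.mk_ker]; exact hpq.le.trans hqm.le)
  have h2 := Ideal.height_add_one_le_of_lt_of_isPrime (hmap p q le_rfl hpq.le hpq)
  have h3 := Ideal.height_add_one_le_of_lt_of_isPrime (hmap q m hpq.le (hpq.le.trans hqm.le) hqm)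
  have h4 : (1 : ℕ∞) + 1 ≤ 1 :=
    (add_le_add_left (le_trans le_add_self h2) 1).trans (h3.trans h1)
  exact absurd h4 (by decide)

variable [Infinite K] [Fintype σ] [DecidableEq σ]

/-- A member of a homogeneous system of parameters may be exchanged for a general linear
combination of forms that have no common zero on the curve cut out by the other members. -/
theorem IsSOP.exists_update {ι : Type*} [Fintype ι] {f : σ → MvPolynomial σ K} {deg : σ → ℕ}
    (hf : IsSOP f deg) (k : σ) (g : ι → MvPolynomial σ K) {γ : ℕ}
    (hg : ∀ i, (g i).IsHomogeneous γ) (hγ : 0 < γ)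
    (hprime : ∀ q : Ideal (MvPolynomial σ K), q.IsPrime → (∀ j, j ≠ k → f j ∈ q) →
      (∀ i, g i ∈ q) → ∀ i, X i ∈ q) :
    ∃ v : ι → K, IsSOP (Function.update f k (∑ i, C (v i) * g i)) (Function.update deg k γ) := by
  classical
  set B := Ideal.span (f '' {k}ᶜ) with hB
  let M : Set (Ideal (MvPolynomial σ K)) := {q ∈ B.minimalPrimes | ¬ ∀ i, X i ∈ q}
  have hMfin : M.Finite := (B.finite_minimalPrimes_of_isNoetherianRing).subset (Set.sep_subset _ _)
  let φ : (ι → K) →ₗ[K] MvPolynomial σ K :=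
    ∑ i, (LinearMap.toSpanSingleton K (MvPolynomial σ K) (g i)) ∘ₗ LinearMap.proj i
  have hφ : ∀ v, φ v = ∑ i, C (v i) * g i := by
    intro v
    simp [φ, LinearMap.sum_apply, MvPolynomial.smul_eq_C_mul]
  let W : M → Submodule K (ι → K) := fun q => (q.1.restrictScalars K).comap φ
  have hBq : ∀ q, B ≤ q ↔ ∀ j, j ≠ k → f j ∈ q := by
    intro q
    rw [hB, Ideal.span_le]
    constructor
    · intro h j hj; exact h ⟨j, hj, rfl⟩
    · rintro h _ ⟨j, hj, rfl⟩; exact h j hj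
  have hW : ∀ q, W q ≠ ⊤ := by
    rintro ⟨q, hq, hqX⟩ htop
    apply hqX
    refine hprime q hq.1.1 ((hBq q).1 hq.1.2) fun i => ?_
    have : Pi.single i 1 ∈ W ⟨q, hq, hqX⟩ := htop ▸ Submodule.mem_top
    have h2 : φ (Pi.single i 1) ∈ q := this
    rw [hφ, Finset.sum_eq_single i] at h2
    · simpa using h2
    · intro j _ hj; simp [hj]
    · simp
  have : Finite M := hMfin
  obtain ⟨v, hv⟩ := Submodule.exists_forall_notMem_of_forall_ne_top W hW
  refine ⟨v, ?_, ?_, ?_⟩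
  · intro i
    by_cases hi : i = k
    · subst hi
      simp only [Function.update_self]
      refine IsHomogeneous.sum _ _ _ fun j _ => ?_
      simpa using (isHomogeneous_C σ (v j)).mul (hg j)
    · simp only [Function.update_of_ne hi]; exact hf.homog i
  · intro i
    by_cases hi : i = k
    · subst hi; simpa using hγ
    · simp only [Function.update_of_ne hi]; exact hf.pos i
  · intro i
    rw [span_range_update, Ideal.radical_eq_sInf, Ideal.mem_sInf]
    rintro q ⟨hq, hqp⟩
    rw [sup_le_iff, Ideal.span_singleton_le_iff_mem] at hq
    obtain ⟨c, hc, hcq, hcm, hch⟩ := exists_prime_homogeneous_core q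
    have hlh : (∑ i, C (v i) * g i).IsHomogeneous γ :=
      IsHomogeneous.sum _ _ _ fun j _ => by simpa using (isHomogeneous_C σ (v j)).mul (hg j)
    have hlc := hch _ _ hlh hq.2
    have hBc : B ≤ c := (hBq c).2 fun j hj => hch _ _ (hf.homog j) ((hBq q).1 hq.1 j hj)
    obtain ⟨p, hp, hpc⟩ := Ideal.exists_minimalPrimes_le hBc
    by_cases hpX : ∀ i, X i ∈ p
    · exact hcq (hpc (hpX i))
    · have hlp : ∑ i, C (v i) * g i ∉ p := by
        rw [← hφ]
        exact hv ⟨p, hp, hpX⟩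
      have hlt : p < c := lt_of_le_of_ne hpc fun h => hlp (h ▸ hlc)
      by_cases hcm' : c = RingHom.ker (constantCoeff : MvPolynomial σ K →+* K)
      · apply hcq
        rw [hcm', RingHom.mem_ker, constantCoeff_X]
      · exfalso
        have := hp.1.1
        have : (RingHom.ker (constantCoeff : MvPolynomial σ K →+* K)).IsPrime := RingHom.ker_isPrime _
        refine not_lt_lt_of_minimal (p := p) (x := f k) ⟨⟨inferInstance, ?_⟩, ?_⟩ hlt
          (lt_of_le_of_ne hcm hcm')
        · rw [sup_le_iff, Ideal.span_singleton_le_iff_mem]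
          refine ⟨hpc.trans hcm, ?_⟩
          exact constantCoeff_eq_zero_of_isHomogeneous (hf.homog k) (hf.pos k)
        · rintro r ⟨hr, hpr⟩ -
          have hrf : (Ideal.span (Set.range f)).radical ≤ r := by
            rw [hr.radical_le_iff, span_range_eq f k]
            exact (sup_le_sup_right hp.1.2 _).trans hpr
          intro z hz
          refine (Ideal.span_le.2 ?_) (mem_span_range_X hz)
          rintro _ ⟨i, rfl⟩
          exact hrf (hf.rad i)

end Existence

section Linear

variable {σ K : Type*} [Field K]

theorem isReg_X : IsReg (X : σ → MvPolynomial σ K) := by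
  intro J k hk z hz
  rw [mem_ideal_span_X_image] at hz ⊢
  intro m hm
  obtain ⟨i, hi, hne⟩ := hz (Finsupp.single k 1 + m) (by
    rw [mem_support_iff, coeff_X_mul]; exact mem_support_iff.1 hm)
  refine ⟨i, hi, ?_⟩
  have : k ≠ i := fun h => hk (h ▸ hi)
  simpa [Finsupp.single_apply, this] using hne

theorem IsSOP.eq_zero_of_eval {f : σ → MvPolynomial σ K} {deg : σ → ℕ} (hf : IsSOP f deg)
    {v : σ → K} (hv : ∀ i, eval v (f i) = 0) : v = 0 := by
  funext i
  have : (Ideal.span (Set.range f)).radical ≤ RingHom.ker (eval v) := by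
    rw [(RingHom.ker_isPrime (eval v)).radical_le_iff, Ideal.span_le]
    rintro _ ⟨i, rfl⟩
    exact hv i
  simpa using this (hf.rad i)

theorem X_mem_radical_of_eval [Finite σ] [IsAlgClosed K] {ι : Type*} {g : ι → MvPolynomial σ K}
    (h : ∀ v : σ → K, (∀ i, eval v (g i) = 0) → v = 0) (i : σ) :
    X i ∈ (Ideal.span (Set.range g)).radical := by
  rw [← vanishingIdeal_zeroLocus_eq_radical (K := K), mem_vanishingIdeal_iff]
  intro v hv
  rw [zeroLocus_span] at hv
  have := h v fun j => by simpa using hv (g j) ⟨j, rfl⟩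
  simp [this]

variable [Fintype σ]

theorem exists_linear_coeffs {p : MvPolynomial σ K} (hp : p.IsHomogeneous 1) :
    ∃ c : σ → K, p = ∑ j, C (c j) * X j := by
  have : p ∈ homogeneousSubmodule σ K 1 := hp
  rw [homogeneousSubmodule_one_eq_span_X, Submodule.mem_span_range_iff_exists_fun] at this
  obtain ⟨c, hc⟩ := this
  exact ⟨c, by simp only [← hc, MvPolynomial.smul_eq_C_mul]⟩

variable [DecidableEq σ]

theorem IsSOP.linear {f : σ → MvPolynomial σ K} {deg : σ → ℕ} (hf : IsSOP f deg)
    (hdeg : ∀ i, deg i = 1) : IsReg f ∧ HasSocleDegree f deg := by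
  have hlin : ∀ i, ∃ c : σ → K, f i = ∑ j, C (c j) * X j := fun i =>
    exists_linear_coeffs (by simpa [hdeg i] using hf.homog i)
  choose M hM using hlin
  let A : Matrix σ σ K := Matrix.of M
  have hdet : IsUnit A.det := by
    rw [isUnit_iff_ne_zero]
    intro h0
    obtain ⟨v, hv, hAv⟩ := Matrix.exists_mulVec_eq_zero_iff.2 h0
    refine hv (hf.eq_zero_of_eval fun i => ?_)
    have := congrFun hAv i
    simpa [hM, Matrix.mulVec, dotProduct, A] using this
  have hXf : ∀ j, (X j : MvPolynomial σ K) = ∑ i, C (A⁻¹ j i) * f i := by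
    intro j
    simp only [hM, Finset.mul_sum]
    rw [Finset.sum_comm]
    have : ∀ l, ∑ i, C (A⁻¹ j i) * (C (M i l) * X l) =
        (C ((A⁻¹ * A) j l) * X l : MvPolynomial σ K) := by
      intro l
      simp [Matrix.mul_apply, map_sum, Finset.sum_mul, A, mul_assoc]
    simp only [this, Matrix.nonsing_inv_mul A hdet, Matrix.one_apply]
    simp
  constructor
  · let φ : MvPolynomial σ K →ₐ[K] MvPolynomial σ K := aeval f
    let ψ : MvPolynomial σ K →ₐ[K] MvPolynomial σ K := aeval fun j => ∑ i, C (A⁻¹ j i) * X i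
    have hφψ : ∀ z, φ (ψ z) = z := by
      intro z
      have : φ.comp ψ = AlgHom.id K _ := by
        ext1 j
        rw [AlgHom.comp_apply, AlgHom.id_apply]
        conv_rhs => rw [hXf j]
        simp only [φ, ψ, aeval_X, map_sum, map_mul, aeval_C, algebraMap_eq]
      exact DFunLike.congr_fun this z
    have hψf : ∀ i, ψ (f i) = X i := by
      intro i
      rw [hM]
      simp only [ψ, map_sum, map_mul, aeval_X, Finset.mul_sum]
      rw [Finset.sum_comm]
      have : ∀ l, ∑ j, aeval (fun j => ∑ i, C (A⁻¹ j i) * X i) (C (M i j)) * (C (A⁻¹ j l) * X l) =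
          (C ((A * A⁻¹) i l) * X l : MvPolynomial σ K) := by
        intro l
        simp [Matrix.mul_apply, map_sum, Finset.sum_mul, A, mul_assoc, algebraMap_eq]
      simp only [this, Matrix.mul_nonsing_inv A hdet, Matrix.one_apply]
      simp
    intro J k hk z hz
    have h1 := Ideal.mem_map_of_mem ψ.toRingHom hz
    rw [Ideal.map_span, ← Set.image_comp] at h1
    have h2 : (ψ.toRingHom ∘ f) = X := by funext i; exact hψf i
    rw [h2] at h1
    have h3 := isReg_X J k hk (ψ z) (by
      have : ψ.toRingHom (f k * z) = X k * ψ z := by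
        change ψ (f k * z) = _
        rw [map_mul, hψf]
      rwa [this] at h1)
    have h4 := Ideal.mem_map_of_mem φ.toRingHom h3
    rw [Ideal.map_span, ← Set.image_comp] at h4
    have h5 : (φ.toRingHom ∘ X) = f := by funext i; simp [φ]
    rw [h5] at h4
    have h6 : φ.toRingHom (ψ z) = z := hφψ z
    rwa [h6] at h4
  · intro D y hy _ hyn
    have hD : D = 0 := by
      by_contra hD
      apply hyn
      refine (Ideal.span_le.2 ?_)
        (mem_span_range_X (constantCoeff_eq_zero_of_isHomogeneous hy (Nat.pos_of_ne_zero hD)))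
      rintro _ ⟨j, rfl⟩
      rw [hXf j]
      exact Ideal.sum_mem _ fun i _ => Ideal.mul_mem_left _ _ (Ideal.subset_span ⟨i, rfl⟩)
    simp [hD, hdeg]

variable [Infinite K]

theorem IsSOP.isReg_and_hasSocleDegree {f : σ → MvPolynomial σ K} {deg : σ → ℕ}
    (hf : IsSOP f deg) : IsReg f ∧ HasSocleDegree f deg := by
  suffices H : ∀ (A : Finset σ) (f : σ → MvPolynomial σ K) (deg : σ → ℕ), IsSOP f deg →
      (∀ i, i ∉ A → deg i = 1) → IsReg f ∧ HasSocleDegree f deg from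
    H Finset.univ f deg hf (by simp)
  intro A
  induction A using Finset.induction_on with
  | empty => intro f deg hf h; exact hf.linear fun i => h i (by simp)
  | insert k A _ ih =>
    intro f deg hf h
    obtain ⟨v, hv⟩ := hf.exists_update k X (fun i => isHomogeneous_X K i) one_pos
      fun q _ _ hX => hX
    obtain ⟨hr', hs'⟩ := ih _ _ hv fun i hi => by
      by_cases hik : i = k
      · subst hik; simp
      · rw [Function.update_of_ne hik]; exact h i (by simp [hik, hi])
    have hr : IsReg f := by
      have := IsReg.update (k := k) (g := f k) (γ := deg k) hv hr' (by simpa using hf)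
      simpa using this
    exact ⟨hr, HasSocleDegree.of_update hf hr hv hr' hs'⟩

theorem IsSOP.isReg {f : σ → MvPolynomial σ K} {deg : σ → ℕ} (hf : IsSOP f deg) : IsReg f :=
  hf.isReg_and_hasSocleDegree.1

/-- Macaulay's bound: forms of degree larger than `∑ i, (deg i - 1)` lie in the ideal. -/
theorem IsSOP.mem_of_lt_degree {f : σ → MvPolynomial σ K} {deg : σ → ℕ}
    (hf : IsSOP f deg) {D : ℕ} {z : MvPolynomial σ K} (hz : z.IsHomogeneous D)
    (hD : ∑ i, deg i < D + Fintype.card σ) : z ∈ Ideal.span (Set.range f) := by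
  obtain ⟨T, hT⟩ := Ideal.exists_radical_pow_le_of_fg (Ideal.span (Set.range f))
    (IsNoetherian.noetherian _)
  have hT' : ∀ (D : ℕ) (z : MvPolynomial σ K), z.IsHomogeneous D → T ≤ D →
      z ∈ Ideal.span (Set.range f) := by
    intro D z hz hTD
    apply hT
    have hle : idealOfVars σ K ≤ (Ideal.span (Set.range f)).radical := by
      rw [idealOfVars, Ideal.span_le]
      rintro _ ⟨i, rfl⟩
      exact hf.rad i
    refine Ideal.pow_right_mono hle T ?_
    rw [mem_pow_idealOfVars_iff]
    intro m hm
    have := hz (mem_support_iff.1 hm)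
    rw [Finsupp.degree_eq_weight_one]
    exact hTD.trans this.ge
  suffices H : ∀ t D (z : MvPolynomial σ K), z.IsHomogeneous D → T ≤ D + t →
      ∑ i, deg i < D + Fintype.card σ → z ∈ Ideal.span (Set.range f) from
    H T D z hz (Nat.le_add_left _ _) hD
  intro t
  induction t with
  | zero => intro D z hz h _; exact hT' D z hz h
  | succ t ih =>
    intro D z hz h hD
    by_contra hzn
    have := hf.isReg_and_hasSocleDegree.2 D z hz (fun i =>
      ih (1 + D) _ ((isHomogeneous_X K i).mul hz) (by omega) (by omega)) hzn
    omega

theorem IsSOP.mem_of_forall_mul_mem {f : σ → MvPolynomial σ K} {deg : σ → ℕ}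
    (hf : IsSOP f deg) (k : ℕ) : ∀ {D : ℕ} {y : MvPolynomial σ K}, y.IsHomogeneous D →
    D + k + Fintype.card σ ≤ ∑ i, deg i →
    (∀ z : MvPolynomial σ K, z.IsHomogeneous k → z * y ∈ Ideal.span (Set.range f)) →
      y ∈ Ideal.span (Set.range f) := by
  induction k with
  | zero => intro D y _ _ h; simpa using h 1 (isHomogeneous_one σ K)
  | succ k ih =>
    intro D y hy hD h
    by_contra hyn
    have := hf.isReg_and_hasSocleDegree.2 D y hy (fun i => ?_) hyn
    · omega
    · refine ih ((isHomogeneous_X K i).mul hy) (by omega) fun z hz => ?_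
      rw [← mul_assoc]
      exact h _ (hz.mul (isHomogeneous_X K i))

end Linear

section Irreducible

variable {σ K : Type*} [Field K]

/-- The substitution `X i ↦ X i * T`, separating homogeneous components as coefficients. -/
noncomputable def gradingHom (σ K : Type*) [Field K] :
    MvPolynomial σ K →ₐ[K] Polynomial (MvPolynomial σ K) :=
  aeval fun i => Polynomial.C (X i) * Polynomial.X

theorem gradingHom_of_isHomogeneous {p : MvPolynomial σ K} {D : ℕ} (hp : p.IsHomogeneous D) :
    gradingHom σ K p = Polynomial.C p * Polynomial.X ^ D := by
  conv_lhs => rw [p.as_sum]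
  conv_rhs => rw [p.as_sum]
  rw [map_sum, map_sum, Finset.sum_mul]
  refine Finset.sum_congr rfl fun m hm => ?_
  have hm' := hp (mem_support_iff.1 hm)
  have hm2 : ∑ i ∈ m.support, m i = D := by
    rw [← Finsupp.degree_apply, Finsupp.degree_eq_weight_one]
    exact hm'
  rw [gradingHom, aeval_monomial, monomial_eq, map_mul, Finsupp.prod, Finsupp.prod, map_prod]
  simp only [mul_pow, Finset.prod_mul_distrib, map_pow]
  rw [Finset.prod_pow_eq_pow_sum, hm2, mul_assoc]
  rfl

theorem coeff_gradingHom (p : MvPolynomial σ K) (n : ℕ) :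
    (gradingHom σ K p).coeff n = homogeneousComponent n p := by
  conv_lhs => rw [← sum_homogeneousComponent p, map_sum, Polynomial.finsetSum_coeff]
  simp only [gradingHom_of_isHomogeneous (homogeneousComponent_isHomogeneous _ p),
    Polynomial.coeff_C_mul_X_pow]
  rw [Finset.sum_ite_eq, ite_eq_left_iff]
  intro h
  refine (homogeneousComponent_eq_zero n p ?_).symm
  simpa using h

theorem exists_isHomogeneous_of_mul {A B : MvPolynomial σ K} {d : ℕ}
    (h : (A * B).IsHomogeneous d) (h0 : A * B ≠ 0) : ∃ α, A.IsHomogeneous α := by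
  have hinj : ∀ p : MvPolynomial σ K, p ≠ 0 → gradingHom σ K p ≠ 0 := by
    intro p hp h
    apply hp
    rw [← sum_homogeneousComponent p]
    exact Finset.sum_eq_zero fun i _ => by rw [← coeff_gradingHom, h, Polynomial.coeff_zero]
  have hA := hinj A (left_ne_zero_of_mul h0)
  have hB := hinj B (right_ne_zero_of_mul h0)
  have hAB := gradingHom_of_isHomogeneous h
  rw [map_mul] at hAB
  have h1 := congrArg Polynomial.natDegree hAB
  have h2 := congrArg Polynomial.natTrailingDegree hAB
  rw [Polynomial.natDegree_mul hA hB, Polynomial.natDegree_C_mul_X_pow _ _ h0] at h1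
  rw [Polynomial.natTrailingDegree_mul hA hB, Polynomial.C_mul_X_pow_eq_monomial,
    Polynomial.natTrailingDegree_monomial h0] at h2
  have h3 := Polynomial.natTrailingDegree_le_natDegree (gradingHom σ K A)
  have h4 := Polynomial.natTrailingDegree_le_natDegree (gradingHom σ K B)
  refine ⟨(gradingHom σ K A).natDegree, ?_⟩
  have : homogeneousComponent (gradingHom σ K A).natDegree A = A := by
    conv_rhs => rw [← sum_homogeneousComponent A]
    rw [Finset.sum_eq_single (gradingHom σ K A).natDegree]
    · intro n _ hn
      rw [← coeff_gradingHom]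
      rcases lt_or_gt_of_ne hn with hlt | hgt
      · exact Polynomial.coeff_eq_zero_of_lt_natTrailingDegree (by omega)
      · exact Polynomial.coeff_eq_zero_of_natDegree_lt hgt
    · intro hn
      refine homogeneousComponent_eq_zero _ _ ?_
      simpa using hn
  have h5 := homogeneousComponent_isHomogeneous (gradingHom σ K A).natDegree A
  rwa [this] at h5

theorem isUnit_of_isHomogeneous_zero {A : MvPolynomial σ K} (h : A.IsHomogeneous 0) (h0 : A ≠ 0) :
    IsUnit A := by
  have := (totalDegree_eq_zero_iff_eq_C).1 ((totalDegree_zero_iff_isHomogeneous σ).2 h)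
  rw [this] at h0 ⊢
  exact (isUnit_iff_ne_zero.2 fun h => h0 (by rw [h, C_0])).map C

theorem not_isUnit_of_isHomogeneous {A : MvPolynomial σ K} {α : ℕ} (h : A.IsHomogeneous α)
    (hα : 0 < α) : ¬ IsUnit A := fun hu => by
  have := hu.map (constantCoeff : MvPolynomial σ K →+* K)
  rw [constantCoeff_eq_zero_of_isHomogeneous h hα] at this
  exact not_isUnit_zero this

theorem IsSOP.one_notMem {f : σ → MvPolynomial σ K} {deg : σ → ℕ} (hf : IsSOP f deg) :
    (1 : MvPolynomial σ K) ∉ Ideal.span (Set.range f) := by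
  intro h
  have : Ideal.span (Set.range f) ≤ RingHom.ker (constantCoeff : MvPolynomial σ K →+* K) := by
    rw [Ideal.span_le]
    rintro _ ⟨i, rfl⟩
    exact constantCoeff_eq_zero_of_isHomogeneous (hf.homog i) (hf.pos i)
  simpa using this h

theorem isSOP_of_eval [Finite σ] [IsAlgClosed K] {f : σ → MvPolynomial σ K} {deg : σ → ℕ}
    (hf : ∀ i, (f i).IsHomogeneous (deg i)) (hpos : ∀ i, 0 < deg i)
    (h : ∀ v : σ → K, (∀ i, eval v (f i) = 0) → v = 0) : IsSOP f deg :=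
  ⟨hf, hpos, X_mem_radical_of_eval h⟩

variable [Fintype σ] [DecidableEq σ]

/-- No member of a homogeneous system of parameters is in the ideal of the others. -/
theorem IsSOP.notMem_span [Infinite K] {f : σ → MvPolynomial σ K} {deg : σ → ℕ} (hf : IsSOP f deg)
    {J : Set σ} {k : σ} (hk : k ∉ J) : f k ∉ Ideal.span (f '' J) := by
  intro h
  refine hf.one_notMem (Ideal.span_mono (Set.image_subset_range f J) (hf.isReg J k hk 1 ?_))
  rwa [mul_one]

variable [IsAlgClosed K]

theorem exists_common_zero (hσ : 3 ≤ Fintype.card σ) {A B : MvPolynomial σ K} {α β : ℕ}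
    (hA : A.IsHomogeneous α) (hB : B.IsHomogeneous β) (hα : 0 < α) (hβ : 0 < β) :
    ∃ v : σ → K, v ≠ 0 ∧ eval v A = 0 ∧ eval v B = 0 := by
  by_contra! hcon
  have : Infinite K := IsAlgClosed.instInfinite
  obtain ⟨i, j, k, hij, hik, hjk⟩ := Fintype.two_lt_card_iff.1 hσ
  have hsop : IsSOP (fun l => if l = i then B else A) (fun l => if l = i then β else α) := by
    refine isSOP_of_eval (fun l => ?_) (fun l => ?_) fun v hv => ?_
    · split_ifs <;> assumption
    · split_ifs <;> assumption
    · by_contra hv0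
      have h1 := hv i
      have h2 := hv j
      simp only [if_pos, if_neg hij.symm] at h1 h2
      exact hcon v hv0 h2 h1
  refine hsop.notMem_span (J := {j}) (k := k) (by simpa using hjk.symm) (Ideal.subset_span ?_)
  exact ⟨j, rfl, by simp [hij.symm, hik.symm]⟩

/-- A smooth projective hypersurface of positive dimension is irreducible and reduced. -/
theorem prime_of_smooth (hσ : 3 ≤ Fintype.card σ) {P : MvPolynomial σ K} {d : ℕ}
    (hP : P.IsHomogeneous d) (hd : 0 < d) (hP0 : P ≠ 0)
    (hsm : ∀ v : σ → K, v ≠ 0 → eval v P = 0 → ∃ i, eval v (pderiv i P) ≠ 0) : Prime P := by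
  rw [← irreducible_iff_prime]
  refine ⟨not_isUnit_of_isHomogeneous hP hd, fun A B hAB => ?_⟩
  by_contra! hcon
  subst hAB
  obtain ⟨α, hα⟩ := exists_isHomogeneous_of_mul hP hP0
  obtain ⟨β, hβ⟩ := exists_isHomogeneous_of_mul (A := B) (B := A) (by rwa [mul_comm])
    (by rwa [mul_comm])
  have hα0 : 0 < α := Nat.pos_of_ne_zero fun h =>
    hcon.1 (isUnit_of_isHomogeneous_zero (h ▸ hα) (left_ne_zero_of_mul hP0))
  have hβ0 : 0 < β := Nat.pos_of_ne_zero fun h =>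
    hcon.2 (isUnit_of_isHomogeneous_zero (h ▸ hβ) (right_ne_zero_of_mul hP0))
  obtain ⟨v, hv, hvA, hvB⟩ := exists_common_zero hσ hα hβ hα0 hβ0
  obtain ⟨i, hi⟩ := hsm v hv (by simp [hvA])
  apply hi
  simp [hvA, hvB]

end Irreducible

section Derivation

variable {σ K : Type*} [Field K] [Fintype σ]

/-- The chain rule for derivations of a polynomial ring. -/
theorem derivation_aeval {M : Type*} [AddCommGroup M] [Module K M] [Module (MvPolynomial σ K) M]
    [IsScalarTower K (MvPolynomial σ K) M]
    (D : Derivation K (MvPolynomial σ K) M) (F : σ → MvPolynomial σ K) (p : MvPolynomial σ K) :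
    D (aeval F p) = ∑ j, aeval F (pderiv j p) • D (F j) := by
  classical
  induction p using MvPolynomial.induction_on with
  | C a => simp
  | add p q hp hq => simp only [map_add, hp, hq, add_smul, Finset.sum_add_distrib]
  | mul_X p i hp =>
    simp only [map_mul, aeval_X, Derivation.leibniz, hp, pderiv_X, map_add, smul_eq_mul,
      add_smul, Finset.sum_add_distrib, Finset.smul_sum, smul_smul]
    congr 1
    rw [Finset.sum_eq_single i]
    · simp
    · intro j _ hj; simp [hj.symm]
    · simp

theorem derivation_eq_sum {M : Type*} [AddCommGroup M] [Module K M] [Module (MvPolynomial σ K) M]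
    [IsScalarTower K (MvPolynomial σ K) M]
    (D : Derivation K (MvPolynomial σ K) M) (p : MvPolynomial σ K) :
    D p = ∑ j, pderiv j p • D (X j) := by
  simpa using derivation_aeval D X p

end Derivation

section Integral

variable {σ K : Type*} [Field K] [Finite σ]

/-- The coordinate ring of a projective hypersurface is integral over the algebra generated by
forms without common zeros on it. -/
theorem exists_monic_eval_mem {ι : Type*} [Fintype ι] {P : MvPolynomial σ K} {d : ℕ}
    (hP : P.IsHomogeneous d) {T : ι → MvPolynomial σ K} {e : ℕ}
    (hT : ∀ i, (T i).IsHomogeneous e) (he : 0 < e)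
    (hrad : ∀ i, X i ∈ (Ideal.span {P} ⊔ Ideal.span (Set.range T)).radical) (x : MvPolynomial σ K) :
    ∃ Φ : Polynomial (MvPolynomial σ K), Φ.Monic ∧
      (∀ n, Φ.coeff n ∈ Algebra.adjoin K (Set.range T)) ∧ Φ.eval x ∈ Ideal.span {P} := by
  classical
  set A := Algebra.adjoin K (Set.range T) with hA
  set I := Ideal.span {P} with hI
  obtain ⟨N, hN⟩ := Ideal.exists_radical_pow_le_of_fg (I ⊔ Ideal.span (Set.range T))
    (IsNoetherian.noetherian _)
  have hbig : ∀ (D : ℕ) (z : MvPolynomial σ K), z.IsHomogeneous D → N ≤ D →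
      z ∈ I ⊔ Ideal.span (Set.range T) := by
    intro D z hz hND
    apply hN
    have hle : idealOfVars σ K ≤ (I ⊔ Ideal.span (Set.range T)).radical := by
      rw [idealOfVars, Ideal.span_le]
      rintro _ ⟨i, rfl⟩
      exact hrad i
    refine Ideal.pow_right_mono hle N ?_
    rw [mem_pow_idealOfVars_iff]
    intro m hm
    have := hz (mem_support_iff.1 hm)
    rw [Finsupp.degree_eq_weight_one]
    exact hND.trans this.ge
  let E : Set (MvPolynomial σ K ⧸ I) :=
    (fun m => Ideal.Quotient.mk I (monomial m 1)) '' {m : σ →₀ ℕ | m.degree < N}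
  have hE : E.Finite := (Finsupp.finite_of_degree_lt N).image _
  have hAmk : ∀ (a : A) (z : MvPolynomial σ K),
      Ideal.Quotient.mk I (a.1 * z) = a • Ideal.Quotient.mk I z := fun a z => rfl
  have hspan : ∀ (D : ℕ) (z : MvPolynomial σ K), z.IsHomogeneous D →
      Ideal.Quotient.mk I z ∈ Submodule.span A E := by
    intro D
    induction D using Nat.strong_induction_on with
    | _ D ih =>
    intro z hz
    rcases lt_or_ge D N with hlt | hle
    · rw [z.as_sum, map_sum]
      refine Submodule.sum_mem _ fun m hm => ?_
      have h1 : monomial m (coeff m z) = C (coeff m z) * monomial m 1 := by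
        rw [C_mul_monomial, mul_one]
      have h2 : C (coeff m z) ∈ A := A.algebraMap_mem _
      rw [h1, hAmk ⟨_, h2⟩]
      refine Submodule.smul_mem _ _ (Submodule.subset_span ⟨m, ?_, rfl⟩)
      have := hz (mem_support_iff.1 hm)
      rw [Set.mem_ofPred_eq, Finsupp.degree_eq_weight_one]
      exact this.trans_lt hlt
    · have h1 : z ∈ Ideal.span (Set.range (fun o : Option ι => o.elim P T)) := by
        have h2 := hbig D z hz hle
        rw [hI, ← Ideal.span_union] at h2
        refine Ideal.span_mono ?_ h2
        rintro _ (h | ⟨i, rfl⟩)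
        · exact ⟨none, h.symm⟩
        · exact ⟨some i, rfl⟩
      obtain ⟨u, hu, hu0, hsum⟩ := exists_homogeneous_coeffs
        (deg := fun o : Option ι => o.elim d fun _ => e) (by rintro (_ | i); exacts [hP, hT i]) hz h1
      rw [← hsum, Fintype.sum_option, map_add]
      refine Submodule.add_mem _ ?_ ?_
      · have : Ideal.Quotient.mk I (u none * P) = 0 :=
          Ideal.Quotient.eq_zero_iff_mem.2 (Ideal.mul_mem_left _ _ (Ideal.subset_span rfl))
        simp only [Option.elim, this]
        exact Submodule.zero_mem _
      · rw [map_sum]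
        refine Submodule.sum_mem _ fun i _ => ?_
        have hTi : T i ∈ A := Algebra.subset_adjoin ⟨i, rfl⟩
        simp only [Option.elim]
        rw [mul_comm, hAmk ⟨_, hTi⟩]
        refine Submodule.smul_mem _ _ ?_
        rcases lt_or_ge D e with hDe | hDe
        · rw [hu0 (some i) hDe, map_zero]
          exact Submodule.zero_mem _
        · exact ih (D - e) (by omega) _ (hu (some i))
  have htop : Submodule.span A E = ⊤ := by
    rw [eq_top_iff]
    rintro y -
    obtain ⟨z, rfl⟩ := Ideal.Quotient.mk_surjective y
    rw [← sum_homogeneousComponent z, map_sum]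
    exact Submodule.sum_mem _ fun i _ => hspan i _ (homogeneousComponent_isHomogeneous _ _)
  have hfin : Module.Finite A (MvPolynomial σ K ⧸ I) := ⟨⟨hE.toFinset, by simpa using htop⟩⟩
  obtain ⟨p, hp, hpx⟩ := (Algebra.IsIntegral.of_finite A (MvPolynomial σ K ⧸ I)).isIntegral
    (Ideal.Quotient.mk I x)
  refine ⟨p.map A.val.toRingHom, hp.map _, fun n => ?_, ?_⟩
  · rw [Polynomial.coeff_map]; exact (p.coeff n).2
  · rw [← Ideal.Quotient.eq_zero_iff_mem, ← hpx, Polynomial.eval_map, Polynomial.hom_eval₂]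
    rfl

end Integral

section Contradiction

variable {σ K : Type*} [Field K]

theorem derivation_X_eq_zero [CharZero K] {P : MvPolynomial σ K} {L : Type*} [Field L] [Algebra K L]
    [Algebra (MvPolynomial σ K) L] [IsScalarTower K (MvPolynomial σ K) L]
    (hker : ∀ z, algebraMap (MvPolynomial σ K) L z = 0 ↔ z ∈ Ideal.span {P})
    (δ : Derivation K (MvPolynomial σ K) L) (hδP : ∀ z ∈ Ideal.span {P}, δ z = 0)
    {A : Subalgebra K (MvPolynomial σ K)} (hA : ∀ a ∈ A, δ a = 0) {x : MvPolynomial σ K}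
    (hx : ∃ Φ : Polynomial (MvPolynomial σ K), Φ.Monic ∧
      (∀ n, Φ.coeff n ∈ A) ∧ Φ.eval x ∈ Ideal.span {P}) : δ x = 0 := by
  classical
  have hex : ∃ n : ℕ, ∃ Φ : Polynomial (MvPolynomial σ K), Φ.natDegree = n ∧
      Φ.leadingCoeff ∉ Ideal.span {P} ∧ (∀ n, Φ.coeff n ∈ A) ∧ Φ.eval x ∈ Ideal.span {P} := by
    obtain ⟨Φ, h1, h2, h3⟩ := hx
    refine ⟨_, Φ, rfl, ?_, h2, h3⟩
    rw [h1.leadingCoeff, ← hker, map_one]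
    exact one_ne_zero
  obtain ⟨Φ, hdeg, hlc, hcoeff, hev⟩ := Nat.find_spec hex
  have hmin := fun m hm => Nat.find_min hex (m := m) hm
  rw [← hdeg] at hmin
  have hchain : δ (Φ.eval x) = Φ.derivative.eval x • δ x := by
    rw [Polynomial.eval_eq_sum_range, map_sum, Polynomial.derivative_eval,
      Polynomial.sum_over_range _ (by simp), Finset.sum_smul]
    refine Finset.sum_congr rfl fun n _ => ?_
    rw [Derivation.leibniz, hA _ (hcoeff n), smul_zero, add_zero, Derivation.leibniz_pow,
      ← Nat.cast_smul_eq_nsmul (MvPolynomial σ K), smul_smul, smul_smul]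
  rw [hδP _ hev, Algebra.smul_def] at hchain
  rcases mul_eq_zero.1 hchain.symm with h | h
  swap
  · exact h
  exfalso
  rw [hker] at h
  by_cases h0 : Φ.natDegree = 0
  · rw [Polynomial.eq_C_of_natDegree_eq_zero h0, Polynomial.eval_C] at hev
    rw [Polynomial.leadingCoeff, h0] at hlc
    exact hlc hev
  · have hnd : Φ.derivative.natDegree = Φ.natDegree - 1 := Polynomial.natDegree_derivative Φ
    refine hmin _ (show Φ.natDegree - 1 < Φ.natDegree by omega)
      ⟨Φ.derivative, hnd, ?_, fun n => ?_, h⟩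
    · rw [Polynomial.leadingCoeff, hnd, Polynomial.coeff_derivative, ← hker, map_mul]
      rw [show Φ.natDegree - 1 + 1 = Φ.natDegree by omega]
      refine mul_ne_zero (fun h => hlc ((hker _).1 h)) ?_
      have : CharZero L := charZero_of_injective_algebraMap (algebraMap K L).injective
      have h2 : ((Φ.natDegree : ℕ) : L) ≠ 0 := Nat.cast_ne_zero.2 h0
      have h3 : ((Φ.natDegree - 1 : ℕ) : MvPolynomial σ K) + 1 = (Φ.natDegree : ℕ) := by
        rw [← Nat.cast_succ]; congr 1; omega
      rwa [h3, map_natCast]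
    · rw [Polynomial.coeff_derivative]
      exact A.mul_mem (hcoeff _) (A.add_mem (A.natCast_mem n) A.one_mem)

variable [Fintype σ]

theorem false_of_proportional_of_ker [CharZero K] (hσ : 3 ≤ Fintype.card σ)
    {P : MvPolynomial σ K} {L : Type*} [Field L] [Algebra K L]
    [Algebra (MvPolynomial σ K) L] [IsScalarTower K (MvPolynomial σ K) L]
    (hker : ∀ z, algebraMap (MvPolynomial σ K) L z = 0 ↔ z ∈ Ideal.span {P})
    {d : ℕ} (hP : P.IsHomogeneous d)
    {T : σ → MvPolynomial σ K} {e : ℕ} (hT : ∀ i, (T i).IsHomogeneous e) (he : 0 < e)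
    (hrad : ∀ i, X i ∈ (Ideal.span {P} ⊔ Ideal.span (Set.range T)).radical)
    {i₀ : σ} (hTi₀ : T i₀ ∉ Ideal.span {P}) {u : σ → MvPolynomial σ K}
    (h : ∀ k, k ≠ i₀ → ∀ i, T i₀ * pderiv i (T k) - T k * pderiv i (T i₀) - u k * pderiv i P ∈
      Ideal.span {P}) : False := by
  classical
  let π := algebraMap (MvPolynomial σ K) L
  let φ : (σ → L) →ₗ[L] (Fin 2 → L) := Matrix.mulVecLin
    (Matrix.of ![fun i => π (pderiv i P), fun i => π (pderiv i (T i₀))])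
  have hφ : LinearMap.ker φ ≠ ⊥ := φ.ker_ne_bot_of_finrank_lt (by simp; omega)
  obtain ⟨w, hw, hw0⟩ := Submodule.exists_mem_ne_zero_of_ne_bot hφ
  have hw1 : ∑ i, π (pderiv i P) * w i = 0 := by
    simpa [φ, Matrix.mulVec, dotProduct] using congrFun (LinearMap.mem_ker.1 hw) 0
  have hw2 : ∑ i, π (pderiv i (T i₀)) * w i = 0 := by
    simpa [φ, Matrix.mulVec, dotProduct] using congrFun (LinearMap.mem_ker.1 hw) 1
  let δ : Derivation K (MvPolynomial σ K) L := mkDerivation K w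
  have hδ : ∀ z, δ z = ∑ i, π (pderiv i z) * w i := by
    intro z
    rw [derivation_eq_sum δ z]
    simp only [δ, mkDerivation_X, Algebra.smul_def, π]
  have hδP : ∀ z ∈ Ideal.span {P}, δ z = 0 := by
    intro z hz
    have hPm : π P = 0 := (hker P).2 (Ideal.subset_span rfl)
    obtain ⟨c, rfl⟩ := Ideal.mem_span_singleton.1 hz
    rw [Derivation.leibniz, hδ P, hw1, smul_zero, add_zero, Algebra.smul_def]
    exact mul_eq_zero_of_left hPm _
  have hδT : ∀ k, δ (T k) = 0 := by
    intro k
    by_cases hk : k = i₀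
    · rw [hk, hδ, hw2]
    · have h1 : π (T i₀) * δ (T k) = 0 := by
        have h2 : ∀ i, π (T i₀) * (π (pderiv i (T k)) * w i) =
            π (T k) * (π (pderiv i (T i₀)) * w i) + π (u k) * (π (pderiv i P) * w i) := by
          intro i
          have h3 := (hker _).2 (h k hk i)
          change π _ = 0 at h3
          simp only [map_sub, map_mul] at h3
          linear_combination w i * h3
        rw [hδ, Finset.mul_sum, Finset.sum_congr rfl fun i _ => h2 i, Finset.sum_add_distrib,
          ← Finset.mul_sum, ← Finset.mul_sum, hw1, hw2, mul_zero, mul_zero, add_zero]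
      exact (mul_eq_zero.1 h1).resolve_left fun h => hTi₀ ((hker _).1 h)
  have hδA : ∀ a ∈ Algebra.adjoin K (Set.range T), δ a = 0 := by
    intro a ha
    induction ha using Algebra.adjoin_induction with
    | mem x hx => obtain ⟨k, rfl⟩ := hx; exact hδT k
    | algebraMap r => exact δ.map_algebraMap r
    | add x y _ _ hx hy => rw [map_add, hx, hy, add_zero]
    | mul x y _ _ hx hy => rw [Derivation.leibniz, hx, hy, smul_zero, smul_zero, add_zero]
  apply hw0
  funext i
  have := derivation_X_eq_zero hker δ hδP hδA (exists_monic_eval_mem hP hT he hrad (X i))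
  simpa [δ, mkDerivation_X] using this

theorem false_of_proportional [CharZero K] (hσ : 3 ≤ Fintype.card σ) {P : MvPolynomial σ K} {d : ℕ}
    (hP : P.IsHomogeneous d) (hprime : Prime P)
    {T : σ → MvPolynomial σ K} {e : ℕ} (hT : ∀ i, (T i).IsHomogeneous e) (he : 0 < e)
    (hrad : ∀ i, X i ∈ (Ideal.span {P} ⊔ Ideal.span (Set.range T)).radical)
    {i₀ : σ} (hTi₀ : T i₀ ∉ Ideal.span {P}) {u : σ → MvPolynomial σ K}
    (h : ∀ k, k ≠ i₀ → ∀ i, T i₀ * pderiv i (T k) - T k * pderiv i (T i₀) - u k * pderiv i P ∈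
      Ideal.span {P}) : False := by
  have : (Ideal.span {P}).IsPrime := (Ideal.span_singleton_prime hprime.ne_zero).2 hprime
  have hker : ∀ z, algebraMap (MvPolynomial σ K)
      (FractionRing (MvPolynomial σ K ⧸ Ideal.span {P})) z = 0 ↔ z ∈ Ideal.span {P} := by
    intro z
    rw [IsScalarTower.algebraMap_apply (MvPolynomial σ K) (MvPolynomial σ K ⧸ Ideal.span {P}),
      FaithfulSMul.algebraMap_eq_zero_iff, Ideal.Quotient.algebraMap_eq,
      Ideal.Quotient.eq_zero_iff_mem]
  exact false_of_proportional_of_ker hσ hker hP hT he hrad hTi₀ h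

end Contradiction

section Syzygy

variable {σ K : Type*} [Field K] [Fintype σ] [DecidableEq σ] [Infinite K]

theorem IsSOP.coeff_mem_span_singleton {f : σ → MvPolynomial σ K} {deg : σ → ℕ} (hf : IsSOP f deg)
    {i₀ k : σ} (hk : k ≠ i₀) {w : σ → MvPolynomial σ K}
    (hsum : ∑ j ∈ Finset.univ.erase i₀, f j * w j ∈ Ideal.span {f i₀}) {D : ℕ}
    (hw : (w k).IsHomogeneous D) (hD : ∀ j, j ≠ i₀ → D < deg j) : w k ∈ Ideal.span {f i₀} := by
  have hmem : ∀ j, j ≠ k → f j ∈ Ideal.span (f '' {k}ᶜ) := fun j hj =>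
    Ideal.subset_span ⟨j, hj, rfl⟩
  have h1 : w k ∈ Ideal.span (f '' {k}ᶜ) := by
    refine hf.isReg {k}ᶜ k (by simp) _ ?_
    rw [← Finset.add_sum_erase _ _ (Finset.mem_erase.2 ⟨hk, Finset.mem_univ k⟩)] at hsum
    have h2 := (Ideal.span_singleton_le_iff_mem _).2 (hmem i₀ hk.symm) hsum
    refine (Submodule.add_mem_iff_left _ ?_).1 h2
    exact Ideal.sum_mem _ fun j hj =>
      Ideal.mul_mem_right _ _ (hmem j (Finset.ne_of_mem_erase hj))
  have h3 : w k ∈ Ideal.span (Set.range fun j : {j // j ≠ k} => f j) := by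
    convert h1 using 2
    ext p
    simp
  obtain ⟨u, -, hu0, hu⟩ := exists_homogeneous_coeffs (deg := fun j : {j // j ≠ k} => deg j)
    (fun j => hf.homog j) hw h3
  rw [← hu, Finset.sum_eq_single ⟨i₀, hk.symm⟩]
  · exact Ideal.mul_mem_left _ _ (Ideal.subset_span rfl)
  · intro j _ hj
    rw [hu0 j (hD j fun h => hj (Subtype.ext h)), zero_mul]
  · simp

end Syzygy

section Core

variable {σ K : Type*} [Field K] [Fintype σ] [DecidableEq σ] [Infinite K]

theorem degree_bound {c d e : ℕ} (hc : 4 ≤ c) (hd : 3 ≤ d) (he : 2 ≤ e) :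
    (d * (e - 1) + e) + (c * (d - 2) + 1) + c ≤ d + (c - 1) * (e * (d - 1)) := by
  obtain ⟨c, rfl⟩ := Nat.exists_eq_add_of_le hc
  obtain ⟨d, rfl⟩ := Nat.exists_eq_add_of_le hd
  obtain ⟨e, rfl⟩ := Nat.exists_eq_add_of_le he
  rw [show 3 + d - 2 = d + 1 by omega, show 3 + d - 1 = d + 2 by omega,
    show 2 + e - 1 = e + 1 by omega, show 4 + c - 1 = c + 3 by omega]
  nlinarith [Nat.zero_le (c * d * e), Nat.zero_le (c * d), Nat.zero_le (c * e),
    Nat.zero_le (d * e)]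

/-- The contradiction for a degree `e ≥ 2` self-map, in terms of its components `T` in adapted
linear coordinates and the corresponding pulled back polar forms `Q`. -/
theorem false_of_pullback [CharZero K] (hσ : 4 ≤ Fintype.card σ) {P G : MvPolynomial σ K}
    {d e : ℕ} (hd : 3 ≤ d) (he : 2 ≤ e) (hP : P.IsHomogeneous d) (hprime : Prime P)
    (hJ : IsSOP (fun i => pderiv i P) fun _ => d - 1) (hG : G.IsHomogeneous (d * (e - 1)))
    {T Q : σ → MvPolynomial σ K} (hT : ∀ k, (T k).IsHomogeneous e) {i₀ : σ}
    (hQ : IsSOP (Function.update Q i₀ P) (Function.update (fun _ => e * (d - 1)) i₀ d))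
    (hEuler : ∑ k, T k * Q k = d * (G * P))
    (hchain : ∀ i, ∑ k, Q k * pderiv i (T k) = pderiv i (G * P))
    (hrad : ∀ i, X i ∈ (Ideal.span {P} ⊔ Ideal.span (Set.range T)).radical) : False := by
  set f := Function.update Q i₀ P with hfdef
  have hfi₀ : f i₀ = P := Function.update_self _ _ _
  have hfk : ∀ k, k ≠ i₀ → f k = Q k := fun k hk => Function.update_of_ne hk _ _
  have hPm : P ∈ Ideal.span {P} := Ideal.subset_span rfl
  have hEuler' : T i₀ * Q i₀ + ∑ k ∈ Finset.univ.erase i₀, T k * Q k = d * (G * P) := by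
    rw [Finset.add_sum_erase _ (fun k => T k * Q k) (Finset.mem_univ i₀), hEuler]
  have hchain' : ∀ i, Q i₀ * pderiv i (T i₀) + ∑ k ∈ Finset.univ.erase i₀, Q k * pderiv i (T k) =
      G * pderiv i P + P * pderiv i G := by
    intro i
    rw [Finset.add_sum_erase _ (fun k => Q k * pderiv i (T k)) (Finset.mem_univ i₀), hchain,
      Derivation.leibniz]
    simp
  have hdeg : ∀ j, j ≠ i₀ → Function.update (fun _ => e * (d - 1)) i₀ d j = e * (d - 1) :=
    fun j hj => Function.update_of_ne hj _ _
  have he2 : 2 * e ≤ e * (d - 1) := by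
    rw [mul_comm 2 e]; exact Nat.mul_le_mul_left e (by omega)
  have hsmall : ∀ k, k ≠ i₀ → Q k ∈ Ideal.span (Set.range f) := fun k hk =>
    Ideal.subset_span ⟨k, hfk k hk⟩
  have hPf : P ∈ Ideal.span (Set.range f) := Ideal.subset_span ⟨i₀, hfi₀⟩
  have hy : G * T i₀ ∈ Ideal.span (Set.range f) := by
    refine hQ.mem_of_forall_mul_mem (Fintype.card σ * (d - 2) + 1) (hG.mul (hT i₀)) ?_ ?_
    · rw [Finset.sum_update_of_mem (Finset.mem_univ i₀), Finset.sum_const,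
        Finset.card_sdiff_of_subset (by simp), Finset.card_univ, Finset.card_singleton,
        smul_eq_mul]
      exact degree_bound hσ hd he
    · intro z hz
      have hz' : z ∈ Ideal.span (Set.range fun i => pderiv i P) := by
        refine hJ.mem_of_lt_degree hz ?_
        rw [Finset.sum_const, Finset.card_univ, smul_eq_mul, show d - 1 = (d - 2) + 1 by omega,
          mul_add]
        omega
      have hPi : ∀ i, pderiv i P * (G * T i₀) ∈ Ideal.span (Set.range f) := by
        intro i
        have : pderiv i P * (G * T i₀) = T i₀ * (∑ k ∈ Finset.univ.erase i₀, Q k * pderiv i (T k))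
            - pderiv i (T i₀) * (∑ k ∈ Finset.univ.erase i₀, T k * Q k)
            + (pderiv i (T i₀) * d * G - T i₀ * pderiv i G) * P := by
          linear_combination (-T i₀) * hchain' i + pderiv i (T i₀) * hEuler'
        rw [this]
        refine Ideal.add_mem _ (Ideal.sub_mem _ (Ideal.mul_mem_left _ _ ?_)
          (Ideal.mul_mem_left _ _ ?_)) (Ideal.mul_mem_left _ _ hPf)
        · exact Ideal.sum_mem _ fun k hk =>
            Ideal.mul_mem_right _ _ (hsmall k (Finset.ne_of_mem_erase hk))
        · exact Ideal.sum_mem _ fun k hk =>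
            Ideal.mul_mem_left _ _ (hsmall k (Finset.ne_of_mem_erase hk))
      obtain ⟨c, rfl⟩ := (Ideal.mem_span_range_iff_exists_fun).1 hz'
      rw [Finset.sum_mul]
      refine Ideal.sum_mem _ fun i _ => ?_
      rw [mul_assoc]
      exact Ideal.mul_mem_left _ _ (hPi i)
  obtain ⟨u, hu, hu0, husum⟩ := exists_homogeneous_coeffs hQ.homog (hG.mul (hT i₀)) hy
  have hdegu : d * (e - 1) + e - e * (d - 1) = 2 * e - d := by
    obtain ⟨d, rfl⟩ := Nat.exists_eq_add_of_le hd
    obtain ⟨e, rfl⟩ := Nat.exists_eq_add_of_le he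
    rw [show 3 + d - 1 = d + 2 by omega, show 2 + e - 1 = e + 1 by omega]
    have : (3 + d) * (e + 1) + (2 + e) + (3 + d) = (2 + e) * (d + 2) + 2 * (2 + e) := by ring
    omega
  have hdegu' : 2 * e < d → d * (e - 1) + e < e * (d - 1) := by
    obtain ⟨d, rfl⟩ := Nat.exists_eq_add_of_le hd
    obtain ⟨e, rfl⟩ := Nat.exists_eq_add_of_le he
    rw [show 3 + d - 1 = d + 2 by omega, show 2 + e - 1 = e + 1 by omega]
    have : (3 + d) * (e + 1) + (2 + e) + (3 + d) = (2 + e) * (d + 2) + 2 * (2 + e) := by ring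
    omega
  have husum' : u i₀ * P + ∑ k ∈ Finset.univ.erase i₀, u k * Q k = G * T i₀ := by
    rw [← husum, ← Finset.add_sum_erase _ (fun k => u k * f k) (Finset.mem_univ i₀), hfi₀]
    congr 1
    exact Finset.sum_congr rfl fun k hk => by rw [hfk k (Finset.ne_of_mem_erase hk)]
  have hTi₀ : T i₀ ∉ Ideal.span {P} := by
    intro hTP
    have hall : ∀ k, T k ∈ Ideal.span {P} := by
      intro k
      by_cases hk : k = i₀
      · rwa [hk]
      · rw [← hfi₀]
        refine hQ.coeff_mem_span_singleton hk ?_ (hT k) fun j hj => ?_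
        · rw [hfi₀, Finset.sum_congr rfl fun j hj => by
            rw [hfk j (Finset.ne_of_mem_erase hj), mul_comm],
            eq_sub_of_add_eq' hEuler']
          exact Ideal.sub_mem _ (Ideal.mul_mem_left _ _ (Ideal.mul_mem_left _ _ hPm))
            (Ideal.mul_mem_right _ _ hTP)
        · rw [hdeg j hj]; omega
    have hle : (Ideal.span {P} ⊔ Ideal.span (Set.range T)).radical ≤ Ideal.span {P} := by
      rw [((Ideal.span_singleton_prime hprime.ne_zero).2 hprime).radical_le_iff]
      refine sup_le le_rfl (Ideal.span_le.2 ?_)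
      rintro _ ⟨k, rfl⟩
      exact hall k
    obtain ⟨c, hc⟩ := Ideal.mem_span_singleton.1 (hle (hrad i₀))
    have h1 := congrArg totalDegree hc
    have hX0 : (X i₀ : MvPolynomial σ K) ≠ 0 := X_ne_zero i₀
    have hc0 : c ≠ 0 := fun h => hX0 (by rw [hc, h, mul_zero])
    rw [totalDegree_X, totalDegree_mul_of_isDomain hprime.ne_zero hc0,
      hP.totalDegree hprime.ne_zero] at h1
    omega
  refine false_of_proportional (by omega) hP hprime hT (by omega) hrad hTi₀ (u := u) fun k hk i => ?_
  refine hfi₀ ▸ hQ.coeff_mem_span_singleton (D := 2 * e - 1) hk (w := fun k =>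
    T i₀ * pderiv i (T k) - T k * pderiv i (T i₀) - u k * pderiv i P) ?_ ?_ fun j hj => ?_
  · rw [hfi₀, Finset.sum_congr rfl fun j hj => by rw [hfk j (Finset.ne_of_mem_erase hj)]]
    have : ∑ j ∈ Finset.univ.erase i₀,
        Q j * (T i₀ * pderiv i (T j) - T j * pderiv i (T i₀) - u j * pderiv i P) =
        T i₀ * (∑ k ∈ Finset.univ.erase i₀, Q k * pderiv i (T k))
        - pderiv i (T i₀) * (∑ k ∈ Finset.univ.erase i₀, T k * Q k)
        - pderiv i P * ∑ k ∈ Finset.univ.erase i₀, u k * Q k := by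
      simp only [Finset.mul_sum, ← Finset.sum_sub_distrib]
      exact Finset.sum_congr rfl fun j _ => by ring
    rw [this, show T i₀ * (∑ k ∈ Finset.univ.erase i₀, Q k * pderiv i (T k))
        - pderiv i (T i₀) * (∑ k ∈ Finset.univ.erase i₀, T k * Q k)
        - pderiv i P * ∑ k ∈ Finset.univ.erase i₀, u k * Q k =
        (T i₀ * pderiv i G - pderiv i (T i₀) * d * G + pderiv i P * u i₀) * P by
      linear_combination T i₀ * hchain' i - pderiv i (T i₀) * hEuler' - pderiv i P * husum']
    exact Ideal.mul_mem_left _ _ hPm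
  · have hpd : ∀ k, (pderiv i (T k)).IsHomogeneous (e - 1) := fun k => (hT k).pderiv
    refine IsHomogeneous.sub (IsHomogeneous.sub ?_ ?_) ?_
    · rw [show 2 * e - 1 = e + (e - 1) by omega]; exact (hT i₀).mul (hpd k)
    · rw [show 2 * e - 1 = e + (e - 1) by omega]; exact (hT k).mul (hpd i₀)
    · rcases lt_or_ge (2 * e) d with hlt | hle
      · rw [hu0 k (by rw [hdeg k hk]; exact hdegu' hlt), zero_mul]
        exact isHomogeneous_zero _ _ _
      · have := hu k
        rw [hdeg k hk, hdegu] at this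
        rw [show 2 * e - 1 = (2 * e - d) + (d - 1) by omega]
        exact this.mul hP.pderiv
  · rw [hdeg j hj]; omega

end Core

theorem eval_smul_of_isHomogeneous {σ K : Type*} [CommSemiring K] {P : MvPolynomial σ K} {d : ℕ}
    (hP : P.IsHomogeneous d) (r : K) (v : σ → K) : eval (r • v) P = r ^ d * eval v P := by
  rw [eval_eq, eval_eq, Finset.mul_sum]
  refine Finset.sum_congr rfl fun m hm => ?_
  have hm' : ∑ i ∈ m.support, m i = d := by
    rw [← Finsupp.degree_apply, Finsupp.degree_eq_weight_one]
    exact hP (mem_support_iff.1 hm)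
  simp only [Pi.smul_apply, smul_eq_mul, mul_pow, Finset.prod_mul_distrib]
  rw [Finset.prod_pow_eq_pow_sum, hm']
  ring

theorem exists_eval_ne_zero {σ K : Type*} [Field K] [Infinite K] {P : MvPolynomial σ K}
    (hP0 : P ≠ 0) : ∃ a, eval a P ≠ 0 := by
  by_contra! h
  exact hP0 (MvPolynomial.funext fun a => by simp [h a])

section AdaptedCoordinates

variable {σ K : Type*} [Field K] [Fintype σ] [DecidableEq σ]

theorem IsSOP.det_ne_zero [Infinite K] {g : σ → MvPolynomial σ K} {deg : σ → ℕ} {V : Matrix σ σ K}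
    (h : IsSOP (fun j => ∑ i, C (V j i) * g i) deg) : V.det ≠ 0 := by
  intro hdet
  obtain ⟨c, hc, hcV⟩ := Matrix.exists_vecMul_eq_zero_iff.2 hdet
  obtain ⟨k, hk⟩ := Function.ne_iff.1 hc
  have hsum : ∑ j, C (c j) * ∑ i, C (V j i) * g i = 0 := by
    simp only [Finset.mul_sum]
    rw [Finset.sum_comm]
    refine Finset.sum_eq_zero fun i _ => ?_
    have := congrFun hcV i
    simp only [← mul_assoc, ← Finset.sum_mul, ← C_mul, ← map_sum]
    rw [show ∑ j, c j * V j i = 0 from this, C_0, zero_mul]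
  rw [← Finset.add_sum_erase _ _ (Finset.mem_univ k)] at hsum
  refine h.notMem_span (J := {k}ᶜ) (k := k) (by simp) ?_
  refine (Ideal.unit_mul_mem_iff_mem _ ((isUnit_iff_ne_zero.2 hk).map C)).1 ?_
  rw [eq_neg_of_add_eq_zero_left hsum]
  exact neg_mem (Ideal.sum_mem _ fun j hj => Ideal.mul_mem_left _ _
    (Ideal.subset_span ⟨j, Finset.ne_of_mem_erase hj, rfl⟩))

/-- The members of a homogeneous system of parameters indexed by `A` can be exchanged for linear
combinations of another system of parameters of constant degree. -/
theorem IsSOP.exists_piecewise [Infinite K] {g h : σ → MvPolynomial σ K} {γ : ℕ} {deg : σ → ℕ}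
    (hg : IsSOP g fun _ => γ) (hh : IsSOP h deg) (A : Finset σ) :
    ∃ V : Matrix σ σ K, IsSOP (A.piecewise (fun j => ∑ i, C (V j i) * g i) h)
      (A.piecewise (fun _ => γ) deg) := by
  induction A using Finset.induction_on with
  | empty => exact ⟨0, by simpa using hh⟩
  | insert k A hk ih =>
    obtain ⟨V, hV⟩ := ih
    obtain ⟨v, hv⟩ := hV.exists_update k g hg.homog (hg.pos k) fun q hq _ hgq i =>
      hq.radical_le_iff.2 (Ideal.span_le.2 (by rintro _ ⟨j, rfl⟩; exact hgq j)) (hg.rad i)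
    refine ⟨V.updateRow k v, ?_⟩
    rw [Finset.piecewise_insert, Finset.piecewise_insert]
    convert hv using 2
    · refine Finset.piecewise_congr _ (fun j hj => ?_) fun _ _ => rfl
      have : j ≠ k := fun h => hk (h ▸ hj)
      simp [Matrix.updateRow_ne this]
    · simp

/-- A nonzero form can be completed to a system of parameters by linear forms. -/
theorem exists_isSOP_update [IsAlgClosed K] {P : MvPolynomial σ K} {d : ℕ} (hP : P.IsHomogeneous d)
    (hd : 0 < d) (hP0 : P ≠ 0) :
    ∃ (i₀ : σ) (l : σ → MvPolynomial σ K),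
      IsSOP (Function.update l i₀ P) (Function.update (fun _ => 1) i₀ d) := by
  have : Infinite K := IsAlgClosed.instInfinite
  obtain ⟨a, ha⟩ := exists_eval_ne_zero hP0
  have ha0 : a ≠ 0 := by
    rintro rfl
    exact ha (by rw [show eval 0 P = constantCoeff P by simp]; exact constantCoeff_eq_zero_of_isHomogeneous hP hd)
  obtain ⟨i₀, hi₀⟩ := Function.ne_iff.1 ha0
  have hi₀ : a i₀ ≠ 0 := hi₀
  refine ⟨i₀, fun j => C (a i₀) * X j - C (a j) * X i₀, isSOP_of_eval ?_ ?_ ?_⟩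
  · intro i
    by_cases hi : i = i₀
    · subst hi; simpa using hP
    · simp only [Function.update_of_ne hi]
      exact (isHomogeneous_C_mul_X _ _).sub (isHomogeneous_C_mul_X _ _)
  · intro i
    by_cases hi : i = i₀
    · subst hi; simpa using hd
    · simp [Function.update_of_ne hi]
  · intro v hv
    have hva : v = (v i₀ / a i₀) • a := by
      funext j
      by_cases hj : j = i₀
      · subst hj; simp [hi₀]
      · have := hv j
        rw [Function.update_of_ne hj] at this
        simp only [map_sub, map_mul, eval_C, eval_X] at this
        simp only [Pi.smul_apply, smul_eq_mul]
        field_simp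
        linear_combination this
    have hvP := hv i₀
    rw [Function.update_self, hva, eval_smul_of_isHomogeneous hP] at hvP
    rcases mul_eq_zero.1 hvP with h | h
    · rw [hva, pow_eq_zero_iff hd.ne' |>.1 h, zero_smul]
    · exact absurd h ha

/-- Linear coordinates in which all but one of the polar forms of a smooth form `P` form, together
with `P`, a system of parameters. -/
theorem exists_adapted_coordinates [IsAlgClosed K] {P : MvPolynomial σ K} {d : ℕ}
    (hP : P.IsHomogeneous d) (hd : 0 < d) (hP0 : P ≠ 0)
    (hJ : IsSOP (fun i => pderiv i P) fun _ => d - 1) :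
    ∃ (i₀ : σ) (V : Matrix σ σ K), IsUnit V.det ∧
      IsSOP (Function.update (fun j => ∑ i, C (V j i) * pderiv i P) i₀ P)
        (Function.update (fun _ => d - 1) i₀ d) := by
  have : Infinite K := IsAlgClosed.instInfinite
  obtain ⟨i₀, l, hl⟩ := exists_isSOP_update hP hd hP0
  obtain ⟨V, hV⟩ := hJ.exists_piecewise hl (Finset.univ.erase i₀)
  obtain ⟨v, hv⟩ := hV.exists_update i₀ (fun i => pderiv i P) hJ.homog (hJ.pos i₀)
    fun q hq _ hgq i =>
      hq.radical_le_iff.2 (Ideal.span_le.2 (by rintro _ ⟨j, rfl⟩; exact hgq j)) (hJ.rad i)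
  refine ⟨i₀, V.updateRow i₀ v, isUnit_iff_ne_zero.2 (IsSOP.det_ne_zero
    (g := fun i => pderiv i P) (deg := fun _ => d - 1) ?_), ?_⟩
  · convert hv using 1
    all_goals
      funext j
      by_cases hj : j = i₀
      · subst hj; simp
      · simp [hj]
  · convert hV using 1
    all_goals
      funext j
      by_cases hj : j = i₀
      · subst hj; simp
      · simp [hj]

end AdaptedCoordinates

theorem eval_aeval {σ K : Type*} [CommSemiring K] (v : σ → K) (F : σ → MvPolynomial σ K) (p : MvPolynomial σ K) :
    eval v (aeval F p) = eval (fun i => eval v (F i)) p := by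
  induction p using MvPolynomial.induction_on with
  | C a => simp
  | add p q hp hq => rw [map_add, map_add, hp, hq, map_add]
  | mul_X p i hp => rw [map_mul, map_mul, hp, aeval_X, map_mul, eval_X]

section SelfMap

variable {σ K : Type*} [Field K] [Fintype σ] [IsAlgClosed K]

theorem mem_span_singleton_of_eval {P q : MvPolynomial σ K} (hP : Prime P)
    (h : ∀ v, eval v P = 0 → eval v q = 0) : q ∈ Ideal.span {P} := by
  rw [← ((Ideal.span_singleton_prime hP.ne_zero).2 hP).radical,
    ← vanishingIdeal_zeroLocus_eq_radical (K := K), mem_vanishingIdeal_iff]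
  intro v hv
  rw [zeroLocus_span] at hv
  simpa using h v (by simpa using hv)

theorem isSOP_pderiv [CharZero K] {P : MvPolynomial σ K} {d : ℕ} (hd : 2 ≤ d)
    (hP : P.IsHomogeneous d)
    (hsm : ∀ v : σ → K, v ≠ 0 → eval v P = 0 → ∃ i, eval v (pderiv i P) ≠ 0) :
    IsSOP (fun i => pderiv i P) fun _ => d - 1 := by
  refine isSOP_of_eval (fun i => hP.pderiv) (fun _ => by omega) fun v hv => ?_
  by_contra hv0
  have hE := congrArg (eval v) hP.sum_X_mul_pderiv
  simp only [map_sum, map_mul, hv, mul_zero, Finset.sum_const_zero, nsmul_eq_mul, map_natCast] at hE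
  have : eval v P = 0 := by
    refine (mul_eq_zero.1 hE.symm).resolve_left ?_
    exact_mod_cast (by omega : d ≠ 0)
  obtain ⟨i, hi⟩ := hsm v hv0 this
  exact hi (hv i)

variable [DecidableEq σ]

/-- A smooth hypersurface of degree at least `3` and dimension at least `2` has no self-map given
by forms of degree at least `2`. -/
theorem false_of_two_le_degree [CharZero K] (hσ : 4 ≤ Fintype.card σ) {P : MvPolynomial σ K}
    {d e : ℕ} (hd : 3 ≤ d) (he : 2 ≤ e) (hP : P.IsHomogeneous d) (hP0 : P ≠ 0)
    (hsm : ∀ v : σ → K, v ≠ 0 → eval v P = 0 → ∃ i, eval v (pderiv i P) ≠ 0)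
    {F : σ → MvPolynomial σ K} (hF : ∀ i, (F i).IsHomogeneous e)
    (hFP : ∀ v : σ → K, v ≠ 0 → eval v P = 0 →
      (fun i => eval v (F i)) ≠ 0 ∧ eval (fun i => eval v (F i)) P = 0) : False := by
  have : Infinite K := IsAlgClosed.instInfinite
  have hprime := prime_of_smooth (by omega) hP (by omega) hP0 hsm
  have hJ := isSOP_pderiv (by omega) hP hsm
  obtain ⟨i₀, V, hV, hL⟩ := exists_adapted_coordinates hP (by omega) hP0 hJ
  have hpull := hP.aeval F hF
  have hmem : aeval F P ∈ Ideal.span {P} := by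
    refine mem_span_singleton_of_eval hprime fun v hv => ?_
    by_cases hv0 : v = 0
    · subst hv0
      rw [show eval 0 (aeval F P) = constantCoeff (aeval F P) by simp]
      exact constantCoeff_eq_zero_of_isHomogeneous hpull (by positivity)
    · rw [eval_aeval]
      exact (hFP v hv0 hv).2
  have hbot : IsGraded (⊥ : Ideal (MvPolynomial σ K)) := by
    intro p hp n
    rw [Ideal.mem_bot.1 hp, map_zero]
    exact Ideal.zero_mem _
  obtain ⟨G, hG, -, hGP⟩ := hbot.exists_sub_mul_mem hP hpull (by simpa using hmem)
  have hGP : aeval F P = G * P := by rw [sub_eq_zero.1 (Ideal.mem_bot.1 hGP), mul_comm]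
  have hGdeg : G.IsHomogeneous (d * (e - 1)) := by
    rwa [show e * d - d = d * (e - 1) by rw [Nat.mul_sub, mul_one, mul_comm]] at hG
  let T : σ → MvPolynomial σ K := fun k => ∑ i, C (V⁻¹ i k) * F i
  let Q : σ → MvPolynomial σ K := fun k => ∑ i, C (V k i) * aeval F (pderiv i P)
  have hT : ∀ k, (T k).IsHomogeneous e := fun k =>
    IsHomogeneous.sum _ _ _ fun i _ => by simpa using (isHomogeneous_C σ (V⁻¹ i k)).mul (hF i)
  have hdual : ∀ D : MvPolynomial σ K →ₗ[K] MvPolynomial σ K,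
      ∑ k, Q k * D (T k) = ∑ i, aeval F (pderiv i P) * D (F i) := by
    intro D
    have hDT : ∀ k, D (T k) = ∑ i, C (V⁻¹ i k) * D (F i) := by
      intro k
      simp only [T, map_sum, ← smul_eq_C_mul, map_smul]
    have hone : ∀ i j, ∑ k, V⁻¹ i k * V k j = if i = j then 1 else 0 := by
      intro i j
      rw [← Matrix.mul_apply, Matrix.nonsing_inv_mul _ hV, Matrix.one_apply]
    calc ∑ k, Q k * D (T k)
        = ∑ k, ∑ j, ∑ i, C (V⁻¹ i k * V k j) * (aeval F (pderiv j P) * D (F i)) := by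
          refine Finset.sum_congr rfl fun k _ => ?_
          rw [hDT, Finset.sum_mul_sum]
          refine Finset.sum_congr rfl fun j _ => Finset.sum_congr rfl fun i _ => ?_
          rw [C_mul]; ring
      _ = ∑ j, ∑ i, C (∑ k, V⁻¹ i k * V k j) * (aeval F (pderiv j P) * D (F i)) := by
          rw [Finset.sum_comm]
          refine Finset.sum_congr rfl fun j _ => ?_
          rw [Finset.sum_comm]
          refine Finset.sum_congr rfl fun i _ => ?_
          rw [map_sum, Finset.sum_mul]
      _ = _ := by
          refine Finset.sum_congr rfl fun j _ => ?_
          simp [hone]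
  have hTzero : ∀ v : σ → K, eval v P = 0 → (∀ k, eval v (T k) = 0) → v = 0 := by
    intro v hvP hvT
    by_contra hv0
    refine (hFP v hv0 hvP).1 ?_
    have h1 : Matrix.vecMul (fun i => eval v (F i)) V⁻¹ = 0 := by
      funext k
      have := hvT k
      simp only [T, map_sum, map_mul, eval_C] at this
      simpa [Matrix.vecMul, dotProduct, mul_comm] using this
    have h2 := congrArg (fun w => Matrix.vecMul w V) h1
    simpa [Matrix.vecMul_vecMul, Matrix.nonsing_inv_mul _ hV] using h2
  refine false_of_pullback hσ hd he hP hprime hJ hGdeg hT (Q := Q) (i₀ := i₀) ?_ ?_ ?_ ?_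
  · refine isSOP_of_eval (fun j => ?_) (fun j => ?_) fun v hv => ?_
    · by_cases hj : j = i₀
      · subst hj; simpa using hP
      · simp only [Function.update_of_ne hj]
        exact IsHomogeneous.sum _ _ _ fun i _ => by
          simpa using (isHomogeneous_C σ (V j i)).mul ((hP.pderiv (i := i)).aeval F hF)
    · by_cases hj : j = i₀
      · subst hj; simp; omega
      · simp only [Function.update_of_ne hj]
        exact Nat.mul_pos (by omega) (by omega)
    · by_contra hv0
      have hvP : eval v P = 0 := by simpa using hv i₀
      obtain ⟨h1, h2⟩ := hFP v hv0 hvP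
      refine h1 (hL.eq_zero_of_eval fun j => ?_)
      by_cases hj : j = i₀
      · subst hj; simpa using h2
      · have := hv j
        rw [Function.update_of_ne hj] at this ⊢
        simpa only [Q, map_sum, map_mul, eval_C, eval_aeval] using this
  · have h1 := hdual LinearMap.id
    simp only [LinearMap.id_apply] at h1
    simp only [mul_comm (T _)]
    have h2 := congrArg (aeval F) hP.sum_X_mul_pderiv
    simp only [map_sum, map_mul, aeval_X, nsmul_eq_mul, map_natCast, hGP] at h2
    rw [h1, ← h2]
    exact Finset.sum_congr rfl fun _ _ => mul_comm _ _
  · intro i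
    rw [← hGP, derivation_aeval]
    simpa using hdual (pderiv i : Derivation K _ _).toLinearMap
  · intro i
    have := X_mem_radical_of_eval (g := fun o : Option σ => o.elim P T) (fun v hv =>
      hTzero v (hv none) fun k => hv (some k)) i
    convert this using 2
    rw [← Ideal.span_union]
    congr 1
    ext p
    simp [Option.exists, eq_comm]

end SelfMap

theorem mk_mem_hypersurface_iff {N d : ℕ} {P : MvPolynomial (Fin (N + 1)) ℂ}
    (hP : P.IsHomogeneous d) {v : Fin (N + 1) → ℂ} (hv : v ≠ 0) :
    Projectivization.mk ℂ v hv ∈ hypersurface P ↔ eval v P = 0 := by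
  refine ⟨fun h => h v hv rfl, fun h w hw hvw => ?_⟩
  obtain ⟨a, rfl⟩ := (Projectivization.mk_eq_mk_iff' ℂ w v hw hv).1 hvw.symm
  rw [eval_smul_of_isHomogeneous hP, h, mul_zero]

theorem exists_eq_mk_of_mem {N : ℕ} {P : MvPolynomial (Fin (N + 1)) ℂ} (x : hypersurface P) :
    ∃ (v : Fin (N + 1) → ℂ) (hv : v ≠ 0) (hx : Projectivization.mk ℂ v hv ∈ hypersurface P),
      x = ⟨Projectivization.mk ℂ v hv, hx⟩ := by
  obtain ⟨x, hx⟩ := x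
  induction x using Projectivization.ind with
  | h v hv => exact ⟨v, hv, hx, rfl⟩

/-- A surjective self-map given by linear forms is injective. -/
theorem injective_of_linear {N d : ℕ} {P : MvPolynomial (Fin (N + 1)) ℂ} (hd : 2 ≤ d)
    (hP : P.IsHomogeneous d) (hprime : Prime P) {f : hypersurface P → hypersurface P}
    (hsurj : Function.Surjective f) {F : Fin (N + 1) → MvPolynomial (Fin (N + 1)) ℂ}
    (hF : ∀ i, (F i).IsHomogeneous 1)
    (hfF : ∀ (v : Fin (N + 1) → ℂ) (hv : v ≠ 0) (hx : Projectivization.mk ℂ v hv ∈ hypersurface P),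
      ∃ hFv : (fun i => eval v (F i)) ≠ 0,
        (f ⟨Projectivization.mk ℂ v hv, hx⟩ : ProjSpace N) =
          Projectivization.mk ℂ (fun i => eval v (F i)) hFv) : Function.Injective f := by
  choose c hc using fun i => exists_linear_coeffs (hF i)
  let M : Matrix (Fin (N + 1)) (Fin (N + 1)) ℂ := Matrix.of c
  have hM : ∀ v, (fun i => eval v (F i)) = M.mulVec v := by
    intro v
    funext i
    rw [hc i]
    simp [M, Matrix.mulVec, dotProduct]
  have hdet : M.det ≠ 0 := by
    intro h0
    obtain ⟨b, hb, hbM⟩ := Matrix.exists_vecMul_eq_zero_iff.2 h0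
    let l : MvPolynomial (Fin (N + 1)) ℂ := ∑ i, C (b i) * X i
    have hl : ∀ v, eval v l = b ⬝ᵥ v := fun v => by simp [l, dotProduct]
    have hl0 : l ≠ 0 := by
      intro h
      refine hb (funext fun i => ?_)
      have := hl (Pi.single i 1)
      rw [h] at this
      simpa using this.symm
    have hlhom : l.IsHomogeneous 1 := IsHomogeneous.sum _ _ _ fun i _ => isHomogeneous_C_mul_X _ _
    have hlP : l ∈ Ideal.span {P} := by
      refine mem_span_singleton_of_eval hprime fun w hw => ?_
      by_cases hw0 : w = 0
      · rw [hl, hw0, dotProduct_zero]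
      obtain ⟨x, hx⟩ := hsurj ⟨Projectivization.mk ℂ w hw0, (mk_mem_hypersurface_iff hP hw0).2 hw⟩
      obtain ⟨v, hv, hvx, rfl⟩ := exists_eq_mk_of_mem x
      obtain ⟨hFv, hfv⟩ := hfF v hv hvx
      rw [hx] at hfv
      obtain ⟨a, rfl⟩ := (Projectivization.mk_eq_mk_iff' ℂ _ _ hw0 hFv).1 hfv
      rw [hl, hM, dotProduct_smul, Matrix.dotProduct_mulVec, hbM, zero_dotProduct, smul_zero]
    obtain ⟨q, hq⟩ := Ideal.mem_span_singleton.1 hlP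
    have hq0 : q ≠ 0 := fun h => hl0 (by rw [hq, h, mul_zero])
    have := congrArg totalDegree hq
    rw [hlhom.totalDegree hl0, totalDegree_mul_of_isDomain hprime.ne_zero hq0,
      hP.totalDegree hprime.ne_zero] at this
    omega
  have hinj : Function.Injective M.mulVec :=
    Matrix.mulVec_injective_iff_isUnit.2 ((Matrix.isUnit_iff_isUnit_det _).2
      (isUnit_iff_ne_zero.2 hdet))
  intro x y hxy
  obtain ⟨v, hv, hvx, rfl⟩ := exists_eq_mk_of_mem x
  obtain ⟨w, hw, hwx, rfl⟩ := exists_eq_mk_of_mem y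
  obtain ⟨hFv, hfv⟩ := hfF v hv hvx
  obtain ⟨hFw, hfw⟩ := hfF w hw hwx
  rw [hxy, hfw] at hfv
  obtain ⟨a, ha⟩ := (Projectivization.mk_eq_mk_iff' ℂ _ _ hFw hFv).1 hfv
  rw [hM, hM, ← Matrix.mulVec_smul] at ha
  exact Subtype.ext ((Projectivization.mk_eq_mk_iff' ℂ _ _ hw hv).2 ⟨a, hinj ha⟩).symm

/-- A surjective self-map given by constants is injective. -/
theorem injective_of_constant {N : ℕ} {P : MvPolynomial (Fin (N + 1)) ℂ}
    {f : hypersurface P → hypersurface P} (hsurj : Function.Surjective f)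
    {F : Fin (N + 1) → MvPolynomial (Fin (N + 1)) ℂ} (hF : ∀ i, (F i).IsHomogeneous 0)
    (hfF : ∀ (v : Fin (N + 1) → ℂ) (hv : v ≠ 0) (hx : Projectivization.mk ℂ v hv ∈ hypersurface P),
      ∃ hFv : (fun i => eval v (F i)) ≠ 0,
        (f ⟨Projectivization.mk ℂ v hv, hx⟩ : ProjSpace N) =
          Projectivization.mk ℂ (fun i => eval v (F i)) hFv) : Function.Injective f := by
  have hconst : ∀ v w : Fin (N + 1) → ℂ, (fun i => eval v (F i)) = fun i => eval w (F i) := by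
    intro v w
    funext i
    rw [totalDegree_eq_zero_iff_eq_C.1 ((totalDegree_zero_iff_isHomogeneous _).2 (hF i)), eval_C,
      eval_C]
  have hf : ∀ x y, f x = f y := by
    intro x y
    obtain ⟨v, hv, hvx, rfl⟩ := exists_eq_mk_of_mem x
    obtain ⟨w, hw, hwx, rfl⟩ := exists_eq_mk_of_mem y
    obtain ⟨hFv, hfv⟩ := hfF v hv hvx
    obtain ⟨hFw, hfw⟩ := hfF w hw hwx
    refine Subtype.ext (hfv.trans (Eq.trans ?_ hfw.symm))
    congr 1
    exact hconst v w
  intro x y _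
  obtain ⟨x, rfl⟩ := hsurj x
  obtain ⟨y, rfl⟩ := hsurj y
  exact hf x y

end SmoothHypersurface

/-- A smooth complex hypersurface `X ⊆ ℙ^{n+1}` of dimension `n ≥ 2` and
degree `d ≥ 3` admits no endomorphism of degree `> 1`: every surjective morphism
`f : X → X` is an isomorphism (in particular bijective). -/
theorem stmt_0 (n d : ℕ) (hn : 2 ≤ n) (hd : 3 ≤ d)
    (P : MvPolynomial (Fin (n + 1 + 1)) ℂ) (hP : P.IsHomogeneous d) (hP0 : P ≠ 0)
    (hsm : IsSmoothHypersurface P)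
    (f : hypersurface P → hypersurface P)
    (hf : IsAlgebraicSelfMap P f) (hsurj : Function.Surjective f) :
    Function.Bijective f := by
  refine ⟨?_, hsurj⟩
  obtain ⟨e, F, hF, hfF⟩ := hf
  have hcard : Fintype.card (Fin (n + 1 + 1)) = n + 2 := Fintype.card_fin _
  rcases Nat.lt_or_ge e 2 with he | he
  · interval_cases e
    · exact SmoothHypersurface.injective_of_constant hsurj hF hfF
    · exact SmoothHypersurface.injective_of_linear (by omega) hP
        (SmoothHypersurface.prime_of_smooth (by omega) hP (by omega) hP0 hsm) hsurj hF hfF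
  · refine (SmoothHypersurface.false_of_two_le_degree (by omega) hd he hP hP0 hsm hF
      fun v hv hvP => ?_).elim
    obtain ⟨hFv, hfv⟩ := hfF v hv ((SmoothHypersurface.mk_mem_hypersurface_iff hP hv).2 hvP)
    exact ⟨hFv, (SmoothHypersurface.mk_mem_hypersurface_iff hP hFv).1 (hfv ▸ Subtype.coe_prop _)⟩
end

section
/- For integers n ≥ 1 and d ≥ 3, the rational function ω = (1+x)^{n+2} / (x^{n+1}(1+2x)(1+(2−d)x)) has residues Res_{x=∞} ω = 1/(2(d−2)), Res_{x=−1/2} ω = (−1)^{n+1}/(2d), and Res_{x=1/(d−2)} ω = −(d−1)^{n+2}/(d(d−2)); hence by the residue theorem Res_{x=0} ω = (2(d−1)^{n+2} − d + (−1)^n(d−2)) / (2d(d−2)). -/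
open Filter

/-- The residue of a meromorphic function `f` at the point `a`, defined as the limit as
`r → 0⁺` of `(2πi)⁻¹ ∮_{|z-a|=r} f(z) dz`. -/
noncomputable def residue (f : ℂ → ℂ) (a : ℂ) : ℂ :=
  limUnder (nhdsWithin (0 : ℝ) (Set.Ioi 0))
    (fun r : ℝ => (2 * Real.pi * Complex.I)⁻¹ * circleIntegral f a r)

/-- The residue at `x = ∞` of the meromorphic 1-form `f(x) dx` on the Riemann sphere:
substituting `x = 1/t` it equals the residue at `t = 0` of `-t⁻² f(1/t) dt`. -/
noncomputable def residueAtInf (f : ℂ → ℂ) : ℂ :=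
  residue (fun t => -(f t⁻¹) / t ^ 2) 0

/-- The rational function `ω = (1+x)^{n+2} / (x^{n+1}(1+2x)(1+(2−d)x))`. -/
noncomputable def omegaFun (n d : ℕ) (x : ℂ) : ℂ :=
  (1 + x) ^ (n + 2) / (x ^ (n + 1) * (1 + 2 * x) * (1 + (2 - (d : ℂ)) * x))

open scoped Topology

/-- `f` has residue `v` at `a`: on all sufficiently small circles around `a` the function `f` is
integrable with normalized integral `v`. -/
def HasResidueAt (f : ℂ → ℂ) (a v : ℂ) : Prop :=
  ∀ᶠ r : ℝ in 𝓝[>] 0, CircleIntegrable f a r ∧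
    (2 * Real.pi * Complex.I)⁻¹ * circleIntegral f a r = v

namespace HasResidueAt

variable {f g : ℂ → ℂ} {a v w : ℂ}

theorem residue_eq (h : HasResidueAt f a v) : residue f a = v :=
  (tendsto_const_nhds.congr' (h.mono fun _ hr => hr.2.symm)).limUnder_eq

theorem congr (h : HasResidueAt f a v) (hfg : ∀ᶠ z in 𝓝[≠] a, f z = g z) :
    HasResidueAt g a v := by
  obtain ⟨ε, hε, hball⟩ := Metric.mem_nhdsWithin_iff.1 hfg
  filter_upwards [h, Ioo_mem_nhdsGT hε] with r hr hrε
  have heq : Set.EqOn f g (Metric.sphere a r) := fun z hz =>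
    hball ⟨Metric.mem_ball.2 ((Metric.mem_sphere.1 hz).trans_lt hrε.2),
      Metric.ne_of_mem_sphere hz hrε.1.ne'⟩
  refine ⟨(circleIntegrable_congr (by rwa [abs_of_pos hrε.1])).1 hr.1, ?_⟩
  rw [← circleIntegral.integral_congr hrε.1.le heq, hr.2]

theorem add (hf : HasResidueAt f a v) (hg : HasResidueAt g a w) :
    HasResidueAt (fun z => f z + g z) a (v + w) := by
  filter_upwards [hf, hg] with r hr hr'
  refine ⟨hr.1.add hr'.1, ?_⟩
  rw [circleIntegral.integral_add hr.1 hr'.1, mul_add, hr.2, hr'.2]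

theorem const_mul (c : ℂ) (hf : HasResidueAt f a v) :
    HasResidueAt (fun z => c * f z) a (c * v) := by
  filter_upwards [hf] with r hr
  refine ⟨hr.1.const_smul (a := c), ?_⟩
  rw [circleIntegral.integral_const_mul, mul_left_comm, hr.2]

end HasResidueAt

theorem AnalyticAt.hasResidueAt_div {g : ℂ → ℂ} {a : ℂ} (hg : AnalyticAt ℂ g a) :
    HasResidueAt (fun z => g z / (z - a)) a (g a) := by
  obtain ⟨ε, hε, hball⟩ := Metric.eventually_nhds_iff_ball.1 hg.eventually_analyticAt
  filter_upwards [Ioo_mem_nhdsGT hε] with r hr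
  have hd : DifferentiableOn ℂ g (Metric.closedBall a r) := fun z hz =>
    (hball z (Metric.closedBall_subset_ball hr.2 hz)).differentiableAt.differentiableWithinAt
  constructor
  · refine ContinuousOn.circleIntegrable hr.1.le
      ((hd.continuousOn.mono Metric.sphere_subset_closedBall).div (by fun_prop) fun z hz => ?_)
    exact sub_ne_zero.2 (Metric.ne_of_mem_sphere hz hr.1.ne')
  · have h := hd.circleIntegral_sub_inv_smul (Metric.mem_ball_self hr.1)
    simp only [smul_eq_mul, inv_mul_eq_div] at h
    rw [h, inv_mul_cancel_left₀ Complex.two_pi_I_ne_zero]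

theorem hasResidueAt_inv_pow_add_two (j : ℕ) :
    HasResidueAt (fun z => z⁻¹ ^ (j + 2)) 0 0 := by
  filter_upwards [self_mem_nhdsWithin] with r hr
  have hr : 0 < r := hr
  have hfun : (fun z : ℂ => z⁻¹ ^ (j + 2)) = fun z => (z - 0) ^ (-((j + 2 : ℕ) : ℤ)) := by
    ext z
    rw [sub_zero, zpow_neg, zpow_natCast, inv_pow]
  rw [hfun, circleIntegral.integral_sub_zpow_of_ne (by omega), mul_zero]
  exact ⟨circleIntegrable_sub_zpow_iff.2 (Or.inr (Or.inr (by simpa using (abs_pos.2 hr.ne').ne))), rfl⟩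

theorem hasResidueAt_one_add_inv_pow_mul_inv_pow_add_two (m j : ℕ) :
    HasResidueAt (fun z => (1 + z⁻¹) ^ m * z⁻¹ ^ (j + 2)) 0 0 := by
  induction m generalizing j with
  | zero => simpa using hasResidueAt_inv_pow_add_two j
  | succ m ih =>
    convert (ih j).add (ih (j + 1)) using 1
    · ext z
      ring
    · ring

theorem hasResidueAt_one_add_inv_pow_mul_inv (m : ℕ) :
    HasResidueAt (fun z => (1 + z⁻¹) ^ m * z⁻¹) 0 1 := by
  induction m with
  | zero => simpa using (analyticAt_const (v := (1 : ℂ)) (x := (0 : ℂ))).hasResidueAt_div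
  | succ m ih =>
    convert ih.add (hasResidueAt_one_add_inv_pow_mul_inv_pow_add_two m 0) using 1
    · ext z
      ring
    · ring

theorem hasResidueAt_one_add_inv_pow (m : ℕ) :
    HasResidueAt (fun z => (1 + z⁻¹) ^ m) 0 m := by
  induction m with
  | zero =>
    refine HasResidueAt.congr (f := fun z => z / (z - 0)) ?_ ?_
    · simpa using (analyticAt_id (𝕜 := ℂ) (z := (0 : ℂ))).hasResidueAt_div
    · filter_upwards [self_mem_nhdsWithin] with z hz
      simpa using div_self (show z ≠ 0 from hz)
  | succ m ih =>
    convert ih.add (hasResidueAt_one_add_inv_pow_mul_inv m) using 1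
    · ext z
      ring
    · push_cast
      ring

theorem eventually_one_sub_mul_ne_zero (c : ℂ) : ∀ᶠ z in 𝓝[≠] (0 : ℂ), 1 - c * z ≠ 0 :=
  (ContinuousAt.eventually_ne (by fun_prop) (by simp)).filter_mono nhdsWithin_le_nhds

theorem hasResidueAt_one_add_pow_div (n : ℕ) {c : ℂ} (hc : c ≠ 0) :
    HasResidueAt (fun z => (1 + z) ^ (n + 2) / (z ^ (n + 1) * (1 - c * z))) 0
      (((1 + c) ^ (n + 2) - (n + 2) * c - 1) / c ^ 2) := by
  induction n with
  | zero =>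
    have hg : AnalyticAt ℂ (fun z : ℂ => (1 + z) ^ 2 / (1 - c * z)) 0 :=
      AnalyticAt.div (by fun_prop) (by fun_prop) (by simp)
    convert hg.hasResidueAt_div using 1
    · ext z
      rw [div_div]
      ring
    · field_simp
      push_cast
      ring
  | succ n ih =>
    have h := (ih.const_mul (1 + c)).add (hasResidueAt_one_add_inv_pow (n + 2))
    convert h.congr (g := fun z => (1 + z) ^ (n + 1 + 2) / (z ^ (n + 1 + 1) * (1 - c * z))) ?_
      using 1
    · field_simp
      push_cast
      ring
    · filter_upwards [self_mem_nhdsWithin, eventually_one_sub_mul_ne_zero c] with z hz hcz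
      have hz : z ≠ 0 := hz
      have hy : 1 + z⁻¹ = (1 + z) / z := by
        field_simp
        ring
      rw [hy, div_pow]
      field_simp
      ring

theorem hasResidueAt_omegaFun_zero (n : ℕ) {d : ℕ} (hd : 3 ≤ d) :
    HasResidueAt (omegaFun n d) 0
      ((2 * ((d : ℂ) - 1) ^ (n + 2) - (d : ℂ) + (-1 : ℂ) ^ n * ((d : ℂ) - 2)) /
        (2 * (d : ℂ) * ((d : ℂ) - 2))) := by
  have hd0 : (d : ℂ) ≠ 0 := by
    exact_mod_cast (by omega : d ≠ 0)
  have hd2 : (d : ℂ) - 2 ≠ 0 := sub_ne_zero.2 (by exact_mod_cast (by omega : d ≠ 2))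
  have h := ((hasResidueAt_one_add_pow_div n (c := -2) (by norm_num)).const_mul (2 / d)).add
    ((hasResidueAt_one_add_pow_div n hd2).const_mul ((d - 2) / d))
  convert h.congr (g := omegaFun n d) ?_ using 1
  · rw [show (1 : ℂ) + -2 = -1 by norm_num, show (1 : ℂ) + (d - 2) = d - 1 by ring]
    field_simp
    ring
  · filter_upwards [self_mem_nhdsWithin, eventually_one_sub_mul_ne_zero (-2),
      eventually_one_sub_mul_ne_zero (d - 2)] with z hz h₁ h₂
    have hz : z ≠ 0 := hz
    rw [omegaFun, show 1 + 2 * z = 1 - -2 * z by ring,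
      show 1 + (2 - (d : ℂ)) * z = 1 - (d - 2) * z by ring]
    have hpq : 2 * (1 - (d - 2) * z) + (d - 2) * (1 - -2 * z) = d := by ring
    generalize 1 - -2 * z = p at *
    generalize 1 - (d - 2) * z = q at *
    field_simp
    linear_combination (1 + z) ^ (n + 2) * hpq

theorem hasResidueAt_omegaFun_neg_half (n : ℕ) {d : ℕ} (hd : d ≠ 0) :
    HasResidueAt (omegaFun n d) (-(1 / 2)) ((-1 : ℂ) ^ (n + 1) / (2 * (d : ℂ))) := by
  have hd0 : (d : ℂ) ≠ 0 := by exact_mod_cast hd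
  have hval : 1 + (2 - (d : ℂ)) * -(1 / 2) = d / 2 := by ring
  have hg : AnalyticAt ℂ
      (fun z : ℂ => (1 + z) ^ (n + 2) / (z ^ (n + 1) * 2 * (1 + (2 - (d : ℂ)) * z)))
      (-(1 / 2)) := by
    refine AnalyticAt.div (by fun_prop) (by fun_prop) ?_
    rw [hval]
    exact mul_ne_zero (by norm_num) (by simpa using hd)
  convert hg.hasResidueAt_div using 1
  · ext z
    rw [omegaFun, div_div]
    congr 1
    ring
  · rw [hval, show (1 : ℂ) + -(1 / 2) = 1 / 2 by norm_num, neg_eq_neg_one_mul (1 / 2 : ℂ), mul_pow]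
    have hsq : ((-1 : ℂ) ^ (n + 1)) * (-1) ^ (n + 1) = 1 := by
      rw [← mul_pow]
      norm_num
    rw [div_eq_div_iff (by simpa using hd) (by simp [hd])]
    linear_combination (d * (1 / 2) ^ (n + 1) : ℂ) * hsq

theorem hasResidueAt_omegaFun_one_div (n : ℕ) {d : ℕ} (hd : 3 ≤ d) :
    HasResidueAt (omegaFun n d) (1 / ((d : ℂ) - 2))
      (-((d : ℂ) - 1) ^ (n + 2) / ((d : ℂ) * ((d : ℂ) - 2))) := by
  have hd0 : (d : ℂ) ≠ 0 := by
    exact_mod_cast (by omega : d ≠ 0)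
  have hd2 : (d : ℂ) - 2 ≠ 0 := sub_ne_zero.2 (by exact_mod_cast (by omega : d ≠ 2))
  have hval : 1 + 2 * (1 / ((d : ℂ) - 2)) = d / (d - 2) := by
    field_simp
    ring
  have hg : AnalyticAt ℂ
      (fun z : ℂ => (1 + z) ^ (n + 2) / (z ^ (n + 1) * (1 + 2 * z) * (2 - (d : ℂ))))
      (1 / ((d : ℂ) - 2)) := by
    refine AnalyticAt.div (by fun_prop) (by fun_prop) ?_
    rw [hval, ← neg_sub (d : ℂ) 2]
    exact mul_ne_zero (mul_ne_zero (pow_ne_zero _ (one_div_ne_zero hd2)) (div_ne_zero hd0 hd2))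
      (neg_ne_zero.2 hd2)
  convert hg.hasResidueAt_div using 1
  · ext z
    rw [omegaFun, div_div]
    congr 1
    field_simp
    ring
  · rw [hval, show 1 + 1 / ((d : ℂ) - 2) = (d - 1) / (d - 2) by field_simp; ring,
      ← neg_sub (d : ℂ) 2, div_pow, div_pow]
    field_simp
    ring

theorem hasResidueAt_omegaFun_inv (n : ℕ) {d : ℕ} (hd : d ≠ 2) :
    HasResidueAt (fun t => -(omegaFun n d t⁻¹) / t ^ 2) 0 (1 / (2 * ((d : ℂ) - 2))) := by
  have hd2 : (d : ℂ) - 2 ≠ 0 := sub_ne_zero.2 (by exact_mod_cast hd)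
  have hne : (0 + 2) * (0 + (2 - (d : ℂ))) ≠ 0 := by
    rw [← neg_sub (d : ℂ) 2, zero_add, zero_add]
    exact mul_ne_zero two_ne_zero (neg_ne_zero.2 hd2)
  have hg : AnalyticAt ℂ
      (fun t : ℂ => -(t + 1) ^ (n + 2) / ((t + 2) * (t + (2 - (d : ℂ))))) 0 :=
    AnalyticAt.div (by fun_prop) (by fun_prop) hne
  convert hg.hasResidueAt_div.congr (g := fun t => -(omegaFun n d t⁻¹) / t ^ 2) ?_ using 1
  · rw [div_eq_div_iff (by simpa using hd2) hne]
    ring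
  · filter_upwards [self_mem_nhdsWithin] with t ht
    have ht : t ≠ 0 := ht
    rw [omegaFun, show 1 + t⁻¹ = (t + 1) / t by field_simp,
      show 1 + 2 * t⁻¹ = (t + 2) / t by field_simp,
      show 1 + (2 - (d : ℂ)) * t⁻¹ = (t + (2 - d)) / t by field_simp, sub_zero, div_pow, inv_pow]
    field_simp
    ring

/-- For integers `n ≥ 1` and `d ≥ 3`, the rational function
`ω = (1+x)^{n+2} / (x^{n+1}(1+2x)(1+(2−d)x))` has residues `Res_∞ ω = 1/(2(d−2))`,
`Res_{−1/2} ω = (−1)^{n+1}/(2d)`, `Res_{1/(d−2)} ω = −(d−1)^{n+2}/(d(d−2))`; hence by the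
residue theorem `Res_0 ω = (2(d−1)^{n+2} − d + (−1)^n (d−2)) / (2d(d−2))`. -/
theorem stmt_15 (n d : ℕ) (hn : 1 ≤ n) (hd : 3 ≤ d) :
    residueAtInf (omegaFun n d) = 1 / (2 * ((d : ℂ) - 2)) ∧
    residue (omegaFun n d) (-(1 / 2)) = (-1 : ℂ) ^ (n + 1) / (2 * (d : ℂ)) ∧
    residue (omegaFun n d) (1 / ((d : ℂ) - 2)) =
      -((d : ℂ) - 1) ^ (n + 2) / ((d : ℂ) * ((d : ℂ) - 2)) ∧
    residue (omegaFun n d) 0 =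
      (2 * ((d : ℂ) - 1) ^ (n + 2) - (d : ℂ) + (-1 : ℂ) ^ n * ((d : ℂ) - 2)) /
        (2 * (d : ℂ) * ((d : ℂ) - 2)) := by
  exact ⟨(hasResidueAt_omegaFun_inv n (by omega)).residue_eq,
    (hasResidueAt_omegaFun_neg_half n (by omega)).residue_eq,
    (hasResidueAt_omegaFun_one_div n hd).residue_eq,
    (hasResidueAt_omegaFun_zero n hd).residue_eq⟩
end
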